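/- Let n ≥ 3 and 1 ≤ k < n/2 be integers and let P = {p₁,…,p_q} ⊂ ℝⁿ be a finite nonempty set of points, each of which has negative n-th coordinate. Suppose v is a positive C⁴ function on ℝⁿ \ P such that at every point the conformal Schouten matrix A_v lies in the cone Γ_k⁺ and satisfies σ_k(A_v) = binom(n,k)·(1/2)^k · v^{4k/(n−2)}; suppose the Kelvin transform w(y) := |y|^{2−n} v(y/|y|²) extends to a C² function on a neighborhood of the origin with w(0) > 0; and suppose v(x) → +∞ as x → p_i for each i. Then ∂v/∂x_n(x) < 0 for every x in the hyperplane H₀ = {x ∈ ℝⁿ : x_n = 0}; in particular, the second fundamental form of H₀ with respect to the conformal metric g_v = v^{4/(n−2)} g_E, which equals −(2/(n−2)) v⁻¹ (∂v/∂x_n) times the induced metric, is positive definite, i.e. H₀ is geodesically convex with respect to g_v. -/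

import Mathlib

open Metric Set Filter

/-- The `j`-th elementary symmetric function of the eigenvalues of a matrix,
i.e. `(-1)^j` times the coefficient of `X^(n-j)` in the characteristic polynomial. -/
noncomputable def sigmaK {n : ℕ} (j : ℕ) (M : Matrix (Fin n) (Fin n) ℝ) : ℝ :=
  (-1 : ℝ) ^ j * (Matrix.charpoly M).coeff (n - j)

/-- The cone `Γ_k⁺`: all the elementary symmetric functions `σ_1, …, σ_k` are positive. -/
def gammaKPlus {n : ℕ} (k : ℕ) (M : Matrix (Fin n) (Fin n) ℝ) : Prop :=
  ∀ j : ℕ, 1 ≤ j → j ≤ k → 0 < sigmaK j M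

/-- Partial derivative of a function on Euclidean space in the `i`-th coordinate direction. -/
noncomputable def pd {n : ℕ} (v : EuclideanSpace ℝ (Fin n) → ℝ) (i : Fin n)
    (x : EuclideanSpace ℝ (Fin n)) : ℝ :=
  fderiv ℝ v x (EuclideanSpace.single i 1)

/-- The conformal Schouten matrix
`A_v = -(2/(n-2)) v⁻¹ ∇²v + (2n/(n-2)²) v⁻² ∇v ⊗ ∇v - (2/(n-2)²) v⁻² |∇v|² Iₙ`. -/
noncomputable def schoutenMatrix {n : ℕ} (v : EuclideanSpace ℝ (Fin n) → ℝ)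
    (x : EuclideanSpace ℝ (Fin n)) : Matrix (Fin n) (Fin n) ℝ :=
  fun i j =>
    -(2 / ((n : ℝ) - 2)) * (v x)⁻¹ * pd (pd v j) i x
      + (2 * (n : ℝ) / ((n : ℝ) - 2) ^ 2) * ((v x)⁻¹) ^ 2 * pd v i x * pd v j x
      - (2 / ((n : ℝ) - 2) ^ 2) * ((v x)⁻¹) ^ 2 * (∑ l, (pd v l x) ^ 2)
        * (if i = j then (1 : ℝ) else 0)

/-- The Kelvin transform `w(y) = |y|^{2-n} v(y/|y|²)` extends to a positive `C^m` function
on a neighbourhood of the origin. -/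
def kelvinExtendsPos {n : ℕ} (v : EuclideanSpace ℝ (Fin n) → ℝ) (m : ℕ) : Prop :=
  ∃ (w : EuclideanSpace ℝ (Fin n) → ℝ) (ε : ℝ), 0 < ε ∧
    ContDiffOn ℝ m w (ball 0 ε) ∧
    (∀ y ∈ ball (0 : EuclideanSpace ℝ (Fin n)) ε, 0 < w y) ∧
    ∀ y ∈ ball (0 : EuclideanSpace ℝ (Fin n)) ε, y ≠ 0 →
      w y = ‖y‖ ^ ((2 : ℝ) - n) * v ((‖y‖ ^ 2)⁻¹ • y)

/-- The Kelvin transform `w(y) = |y|^{2-n} v(y/|y|²)` extends to a `C²` function on a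
neighbourhood of the origin which is positive at the origin. -/
def kelvinExtendsC2PosAtZero {n : ℕ} (v : EuclideanSpace ℝ (Fin n) → ℝ) : Prop :=
  ∃ (w : EuclideanSpace ℝ (Fin n) → ℝ) (ε : ℝ), 0 < ε ∧
    ContDiffOn ℝ 2 w (ball 0 ε) ∧ 0 < w 0 ∧
    ∀ y ∈ ball (0 : EuclideanSpace ℝ (Fin n)) ε, y ≠ 0 →
      w y = ‖y‖ ^ ((2 : ℝ) - n) * v ((‖y‖ ^ 2)⁻¹ • y)


open Polynomial in
lemma hgc_splits_derivative {p : ℝ[X]} (hp : p.Splits) : (derivative p).Splits := by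
  rw [splits_iff_card_roots] at *
  have h1 := card_roots_le_derivative p
  have h2 := natDegree_derivative_lt (p := p)
  have h3 := card_roots' (derivative p)
  by_cases h0 : p.natDegree = 0
  · have := natDegree_derivative_le p
    omega
  · have := h2 h0
    omega

open Polynomial in
lemma hgc_splits_iterate {p : ℝ[X]} (hp : p.Splits) (m : ℕ) : (derivative^[m] p).Splits := by
  induction m with
  | zero => simpa
  | succ m ih => rw [Function.iterate_succ_apply']; exact hgc_splits_derivative ih

lemma hgc_esymm_pos (s : Multiset ℝ) (hs : ∀ x ∈ s, 0 < x) (j : ℕ) (hj : j ≤ s.card) :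
    0 < s.esymm j := by
  rw [Multiset.esymm]
  have hne : (s.powersetCard j) ≠ 0 := by
    intro h
    have := congrArg Multiset.card h
    rw [Multiset.card_powersetCard] at this
    have h2 := Nat.choose_pos hj
    simp at this
    omega
  obtain ⟨t, ht⟩ := Multiset.exists_mem_of_ne_zero hne
  have hpos : ∀ t ∈ s.powersetCard j, 0 < t.prod := by
    intro t ht
    rw [Multiset.mem_powersetCard] at ht
    have : ∀ x ∈ t, 0 < x := fun x hx => hs x (Multiset.mem_of_le ht.1 hx)
    clear ht
    induction t using Multiset.induction_on with
    | empty => simp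
    | cons a t ih =>
      rw [Multiset.prod_cons]
      exact mul_pos (this a (by simp)) (ih (fun x hx => this x (by simp [hx])))
  obtain ⟨t', ht'⟩ := Multiset.exists_cons_of_mem ht
  rw [ht'] at hpos ⊢
  rw [Multiset.map_cons, Multiset.sum_cons]
  have h1 := hpos t (by simp)
  have h2 : 0 ≤ (Multiset.map Multiset.prod t').sum := by
    apply Multiset.sum_nonneg
    intro x hx
    rw [Multiset.mem_map] at hx
    obtain ⟨y, hy, rfl⟩ := hx
    exact (hpos y (by simp [hy])).le
  linarith

open Polynomial in
lemma hgc_sigma_pos {n : ℕ} (k : ℕ) (hk : k ≤ n) (M : Matrix (Fin n) (Fin n) ℝ)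
    (hM : M.IsHermitian) (h0 : ∀ j, j ≤ k → 0 ≤ sigmaK j M) (hpos : 0 < sigmaK k M) :
    ∀ j, j ≤ k → 0 < sigmaK j M := by
  set Q := derivative^[n - k] M.charpoly with hQ
  have hdeg : M.charpoly.natDegree = n := by simp [Matrix.charpoly_natDegree_eq_dim]
  have hcoef : ∀ m, Q.coeff m = ((m + (n - k)).descFactorial (n - k) : ℝ)
      * M.charpoly.coeff (m + (n - k)) := by
    intro m
    rw [hQ, coeff_iterate_derivative]; simp
  have hlead : Q.coeff k = (n.descFactorial (n - k) : ℝ) := by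
    rw [hcoef, show k + (n - k) = n by omega]
    have := M.charpoly_monic
    rw [Monic, leadingCoeff, hdeg] at this
    rw [this]; simp
  have hdf : ∀ m, 0 < ((m + (n - k)).descFactorial (n - k) : ℝ) := by
    intro m
    exact_mod_cast Nat.descFactorial_pos.2 (by omega)
  have hleadpos : 0 < Q.coeff k := by
    rw [hlead]; exact_mod_cast Nat.descFactorial_pos.2 (by omega)
  have hQdeg : Q.natDegree = k := by
    apply le_antisymm
    · rw [natDegree_le_iff_coeff_eq_zero]
      intro m hm
      rw [hcoef, coeff_eq_zero_of_natDegree_lt (by omega)]; simp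
    · exact le_natDegree_of_ne_zero hleadpos.ne'
  have hsp : Q.Splits := hgc_splits_iterate hM.splits_charpoly _
  have hcard := splits_iff_card_roots.1 hsp
  have hsig : ∀ m, m ≤ k → Q.coeff m = ((m + (n - k)).descFactorial (n - k) : ℝ)
      * ((-1) ^ (k - m) * sigmaK (k - m) M) := by
    intro m hm
    rw [hcoef, sigmaK, show n - (k - m) = m + (n - k) by omega, ← mul_assoc ((-1:ℝ)^(k-m)),
      ← mul_pow]
    simp
  have hroots : ∀ x ∈ Q.roots, 0 < x := by
    intro x hx
    by_contra hneg
    push Not at hneg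
    have hx0 : Q.eval x = 0 := (mem_roots'.1 hx).2
    have : 0 < (-1) ^ k * Q.eval x := by
      rw [eval_eq_sum_range, hQdeg, Finset.mul_sum, Finset.sum_range_succ']
      have e0 : 0 < (-1:ℝ) ^ k * (Q.coeff 0 * x ^ 0) := by
        rw [hsig 0 (by omega)]
        have : ((-1:ℝ)^k)*(-1)^k = 1 := by rw [← mul_pow]; simp
        have h3 := mul_pos (hdf 0) hpos
        simp only [Nat.sub_zero, pow_zero, mul_one]
        calc 0 < _ := h3
          _ = ((-1:ℝ)^k*(-1)^k) * (((0 + (n - k)).descFactorial (n - k) : ℝ) * sigmaK k M) := by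
            rw [this]; ring
          _ = _ := by ring
      have e1 : 0 ≤ ∑ i ∈ Finset.range k, (-1:ℝ) ^ k * (Q.coeff (i + 1) * x ^ (i + 1)) := by
        apply Finset.sum_nonneg
        intro i hi
        have hi' : i + 1 ≤ k := by have := Finset.mem_range.1 hi; omega
        rw [hsig (i+1) hi']
        have e2 : (-1:ℝ)^k * (-1)^(k-(i+1)) = (-1)^(i+1) := by
          conv_lhs => rw [show k = (i+1) + (k-(i+1)) by omega]
          rw [pow_add, mul_assoc, show i + 1 + (k - (i + 1)) - (i + 1) = k - (i+1) by omega,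
            ← mul_pow]
          simp
        have e3 : (-1:ℝ)^(i+1) * x^(i+1) = (-x)^(i+1) := by rw [← mul_pow]; ring_nf
        calc 0 ≤ ((i + 1 + (n - k)).descFactorial (n - k) : ℝ) * sigmaK (k - (i+1)) M
            * (-x)^(i+1) := by
              apply mul_nonneg (mul_nonneg (hdf _).le (h0 _ (by omega)))
              exact pow_nonneg (by linarith) _
          _ = _ := by rw [← e3, ← e2]; ring
      linarith
    rw [hx0] at this; simp at this
  intro j hj
  have hv := coeff_eq_esymm_roots_of_card hcard (k := k - j) (by omega)
  rw [hQdeg, show k - (k - j) = j by omega, hsig (k - j) (by omega),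
    show k - (k - j) = j by omega, leadingCoeff, hQdeg] at hv
  have hes := hgc_esymm_pos Q.roots hroots j (by omega)
  have h1 : ((k - j + (n - k)).descFactorial (n - k) : ℝ) * sigmaK j M
      = Q.coeff k * Q.roots.esymm j := by
    have hs : ((-1:ℝ)^j) * (-1)^j = 1 := by rw [← mul_pow]; simp
    linear_combination (-1:ℝ)^j * hv + (Q.coeff k * Q.roots.esymm j
      - ((k - j + (n - k)).descFactorial (n - k) : ℝ) * sigmaK j M) * hs
  have h2 : 0 < ((k - j + (n - k)).descFactorial (n - k) : ℝ) * sigmaK j M := by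
    rw [h1]; positivity
  exact (pos_iff_pos_of_mul_pos h2).1 (hdf _)

open Polynomial in
lemma hgc_sigma_affine {n : ℕ} (j : ℕ) (M : Matrix (Fin n) (Fin n) ℝ) (e : Fin n → ℝ) (t : ℝ) :
    sigmaK j (M + t • Matrix.vecMulVec e e)
      = sigmaK j M + t * (sigmaK j (M + Matrix.vecMulVec e e) - sigmaK j M) := by
  have key : (M + t • Matrix.vecMulVec e e).charpoly = M.charpoly
      + C t * ((M + Matrix.vecMulVec e e).charpoly - M.charpoly) := by
    apply eq_of_infinite_eval_eq
    have hfin : {x | M.charpoly.eval x = 0}.Finite := by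
      have := Polynomial.finite_setOfPred_isRoot (M.charpoly_monic.ne_zero)
      exact this
    refine hfin.infinite_compl.mono ?_
    intro x hx
    simp only [mem_compl_iff, mem_ofPred_eq] at hx
    simp only [mem_ofPred_eq, eval_add, eval_mul, eval_C, eval_sub]
    rw [Matrix.eval_charpoly] at hx
    simp only [Matrix.eval_charpoly]
    have hu : IsUnit (Matrix.scalar (Fin n) x - M).det := isUnit_iff_ne_zero.2 hx
    have gen : ∀ s : ℝ, (Matrix.scalar (Fin n) x - (M + s • Matrix.vecMulVec e e)).det
        = (Matrix.scalar (Fin n) x - M).det * (1 - s *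
          (Matrix.replicateRow Unit e * (Matrix.scalar (Fin n) x - M)⁻¹ * Matrix.replicateCol Unit e) () ()) := by
      intro s
      have := Matrix.det_add_replicateCol_mul_replicateRow (ι := Unit) hu (-s • e) e
      rw [Matrix.vecMulVec_eq Unit]
      rw [show Matrix.scalar (Fin n) x - (M + s • (Matrix.replicateCol Unit e * Matrix.replicateRow Unit e))
        = (Matrix.scalar (Fin n) x - M) + Matrix.replicateCol Unit (-s • e) * Matrix.replicateRow Unit e by
          rw [Matrix.replicateCol_smul, Matrix.smul_mul]; rw [neg_smul]; abel, this]
      congr 1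
      rw [Matrix.det_unique]
      rw [Matrix.replicateCol_smul, Matrix.mul_smul]
      simp only [Matrix.add_apply, Matrix.smul_apply, Matrix.one_apply_eq, smul_eq_mul]
      rw [neg_mul, ← sub_eq_add_neg]
    have g1 := gen 1
    rw [one_smul] at g1
    rw [gen t, g1]; ring
  simp only [sigmaK]
  rw [key]
  simp only [coeff_add, coeff_C_mul, coeff_sub]; ring

lemma hgc_sigma_zero {n : ℕ} (M : Matrix (Fin n) (Fin n) ℝ) : sigmaK 0 M = 1 := by
  have h := M.charpoly_monic
  rw [Polynomial.Monic, Polynomial.leadingCoeff, Matrix.charpoly_natDegree_eq_dim] at h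
  simpa [sigmaK] using h

lemma hgc_sigma_one {n : ℕ} (hn : 1 ≤ n) (M : Matrix (Fin n) (Fin n) ℝ) :
    sigmaK 1 M = M.trace := by
  have : Nonempty (Fin n) := ⟨⟨0, by omega⟩⟩
  have := Matrix.trace_eq_neg_charpoly_coeff M
  simp [sigmaK, this]



open Topology in
lemma hgc_L_pos {n : ℕ} (k : ℕ) (hk : 1 ≤ k) (hkn : k ≤ n) (M : Matrix (Fin n) (Fin n) ℝ)
    (hM : M.IsHermitian) (hc : gammaKPlus k M) (e : Fin n → ℝ) (he : e ≠ 0) :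
    0 < sigmaK k (M + Matrix.vecMulVec e e) - sigmaK k M := by
  by_contra hL
  push Not at hL
  set L : ℕ → ℝ := fun j => sigmaK j (M + Matrix.vecMulVec e e) - sigmaK j M with hLdef
  have hf : ∀ j t, sigmaK j (M + (-t) • Matrix.vecMulVec e e) = sigmaK j M - t * L j := by
    intro j t; rw [hgc_sigma_affine]; simp only [hLdef]; ring
  have hL1 : 0 < L 1 := by
    simp only [hLdef]
    rw [hgc_sigma_one (by omega), hgc_sigma_one (by omega), Matrix.trace_add,
      Matrix.trace_vecMulVec]
    have : 0 < e ⬝ᵥ e := by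
      have h0 : 0 ≤ e ⬝ᵥ e := by
        simp only [dotProduct]; exact Finset.sum_nonneg (fun i _ => mul_self_nonneg _)
      exact lt_of_le_of_ne h0 (fun h => he (dotProduct_self_eq_zero.1 h.symm))
    linarith
  have hs1 := hc 1 le_rfl hk
  set T : ℝ := sigmaK 1 M / L 1 + 1 with hT
  have hTpos : 0 ≤ T := by positivity
  set s : Set ℝ := {t | ∀ j, j ≤ k → 0 ≤ sigmaK j M - t * L j} with hs
  have hclosed : IsClosed (s ∩ Icc 0 T) := by
    apply IsClosed.inter _ isClosed_Icc
    have : s = ⋂ j : ℕ, ⋂ _ : j ≤ k, {t | 0 ≤ sigmaK j M - t * L j} := by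
      ext t; simp [hs]
    rw [this]
    refine isClosed_iInter fun j => isClosed_iInter fun _ => isClosed_le continuous_const ?_
    fun_prop
  have h0s : (0:ℝ) ∈ s := by
    intro j hj
    rcases Nat.eq_zero_or_pos j with rfl | hj0
    · simp [hgc_sigma_zero]
    · simpa using (hc j hj0 hj).le
  have hsub : Icc 0 T ⊆ s := by
    refine hclosed.Icc_subset_of_forall_exists_gt h0s ?_
    intro t ht y hy
    have htk : 0 < sigmaK k (M + (-t) • Matrix.vecMulVec e e) := by
      rw [hf]
      have h1 := hc k hk le_rfl
      have h2 : t * L k ≤ 0 := mul_nonpos_of_nonneg_of_nonpos ht.2.1 hL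
      linarith
    have hherm : (M + (-t) • Matrix.vecMulVec e e).IsHermitian := by
      ext i j
      have := congrFun (congrFun hM i) j
      simp only [Matrix.conjTranspose_apply, star_trivial] at this
      simp [Matrix.vecMulVec_apply, this, mul_comm]
    have hall := hgc_sigma_pos k hkn _ hherm (fun j hj => by rw [hf]; exact ht.1 j hj) htk
    have hev : ∀ᶠ t' in 𝓝 t, ∀ j ∈ Finset.range (k+1), 0 < sigmaK j M - t' * L j := by
      rw [Filter.eventually_all_finset]
      intro j hj
      have h1 := hall j (by have := Finset.mem_range.1 hj; omega)
      rw [hf] at h1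
      have hcont : Continuous (fun t' : ℝ => sigmaK j M - t' * L j) := by fun_prop
      exact hcont.continuousAt.eventually (lt_mem_nhds h1)
    have hev2 : ∀ᶠ t' in 𝓝[>] t, t' ∈ Ioc t y := Ioc_mem_nhdsGT hy
    obtain ⟨t', h1, h2⟩ := ((hev.filter_mono nhdsWithin_le_nhds).and hev2).exists
    exact ⟨t', fun j hj => (h1 j (by simp; omega)).le, h2⟩
  have hTs := hsub ⟨hTpos, le_rfl⟩ 1 hk
  rw [hT, add_mul, div_mul_cancel₀ _ hL1.ne'] at hTs
  linarith

lemma hgc_gamma_add {n : ℕ} (k : ℕ) (hkn : k ≤ n) (M : Matrix (Fin n) (Fin n) ℝ)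
    (hM : M.IsHermitian) (hc : gammaKPlus k M) (e : Fin n → ℝ) (j : ℕ) (hj : 1 ≤ j) (hjk : j ≤ k) :
    sigmaK j M ≤ sigmaK j (M + Matrix.vecMulVec e e) := by
  by_cases he : e = 0
  · simp [he]
  · have := hgc_L_pos j hj (by omega) M hM (fun i hi hij => hc i hi (by omega)) e he
    linarith

/-- Weak monotonicity of `σ_k` at `M`. -/
def hgcMono {n : ℕ} (k : ℕ) (M : Matrix (Fin n) (Fin n) ℝ) : Prop :=
  ∀ N : Matrix (Fin n) (Fin n) ℝ, N.PosSemidef → sigmaK k M ≤ sigmaK k (M + N)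

open scoped MatrixOrder Matrix.Norms.L2Operator in
lemma hgc_mono {n : ℕ} (k : ℕ) (hk : 1 ≤ k) (hkn : k ≤ n) (M : Matrix (Fin n) (Fin n) ℝ)
    (hM : M.IsHermitian) (hc : gammaKPlus k M) : hgcMono k M := by
  intro N hN
  obtain ⟨B, rfl⟩ := CStarAlgebra.nonneg_iff_eq_star_mul_self.mp hN.nonneg
  rw [Matrix.star_eq_conjTranspose]
  have hsum : B.conjTranspose * B = ∑ i, Matrix.vecMulVec (B i) (B i) := by
    ext a b
    simp [Matrix.mul_apply, Matrix.sum_apply, Matrix.vecMulVec_apply]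
  have key : ∀ s : Finset (Fin n), (M + ∑ i ∈ s, Matrix.vecMulVec (B i) (B i)).IsHermitian ∧
      gammaKPlus k (M + ∑ i ∈ s, Matrix.vecMulVec (B i) (B i)) ∧
      sigmaK k M ≤ sigmaK k (M + ∑ i ∈ s, Matrix.vecMulVec (B i) (B i)) := by
    intro s
    classical
    induction s using Finset.induction_on with
    | empty => simpa using ⟨hM, hc⟩
    | insert a s ha ih =>
      obtain ⟨h1, h2, h3⟩ := ih
      rw [Finset.sum_insert ha, add_comm (Matrix.vecMulVec _ _), ← add_assoc]
      refine ⟨?_, ?_, ?_⟩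
      · apply h1.add
        ext i j
        simp [Matrix.vecMulVec_apply, mul_comm]
      · intro j hj hjk
        exact lt_of_lt_of_le (h2 j hj hjk) (hgc_gamma_add k hkn _ h1 h2 (B a) j hj hjk)
      · exact h3.trans (hgc_gamma_add k hkn _ h1 h2 (B a) k hk le_rfl)
  rw [hsum]
  exact (key Finset.univ).2.2

lemma hgc_sigma_eval {n : ℕ} (j : ℕ) : ∃ p : MvPolynomial (Fin n × Fin n) ℝ,
    ∀ M : Matrix (Fin n) (Fin n) ℝ, sigmaK j M = MvPolynomial.eval (fun q => M q.1 q.2) p := by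
  refine ⟨MvPolynomial.C ((-1)^j) * (Matrix.charpoly.univ ℝ (Fin n)).coeff (n - j), ?_⟩
  intro M
  have := Matrix.charpoly.univ_coeff_eval₂Hom (R := ℝ) (Fin n) (RingHom.id ℝ) (fun q => M q.1 q.2) (n-j)
  rw [map_mul, MvPolynomial.eval_C, sigmaK]
  congr 1
  rw [show Matrix.of (Function.curry (fun q : Fin n × Fin n => M q.1 q.2)) = M from rfl] at this
  rw [← this]; rfl

lemma hgc_sigma_continuous {n : ℕ} (j : ℕ) :
    Continuous (fun M : Matrix (Fin n) (Fin n) ℝ => sigmaK j M) := by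
  obtain ⟨p, hp⟩ := hgc_sigma_eval (n := n) j
  simp_rw [hp]
  apply (MvPolynomial.continuous_eval p).comp
  exact continuous_pi fun q => continuous_id.matrix_elem _ _

lemma hgc_mono_closed {n : ℕ} (k : ℕ) : IsClosed {M : Matrix (Fin n) (Fin n) ℝ | hgcMono k M} := by
  have : {M : Matrix (Fin n) (Fin n) ℝ | hgcMono k M} =
      ⋂ N : Matrix (Fin n) (Fin n) ℝ, ⋂ _ : N.PosSemidef, {M | sigmaK k M ≤ sigmaK k (M + N)} := by
    ext M; simp [hgcMono]
  rw [this]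
  refine isClosed_iInter fun N => isClosed_iInter fun _ => isClosed_le (hgc_sigma_continuous k) ?_
  exact (hgc_sigma_continuous k).comp (continuous_id.add continuous_const)

open Topology in
lemma hgc_elliptic {n : ℕ} (k : ℕ) (hk : 1 ≤ k) (hkn : k ≤ n) (M₀ : Matrix (Fin n) (Fin n) ℝ)
    (hM : M₀.IsHermitian) (hc : gammaKPlus k M₀) (e₀ : Fin n → ℝ) (he : e₀ ≠ 0) :
    ∃ θ : ℝ, 0 < θ ∧ ∀ᶠ q : Matrix (Fin n) (Fin n) ℝ × (Fin n → ℝ) × ℝ in 𝓝 (M₀, e₀, 0),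
      0 < q.2.2 → sigmaK k (q.1 + q.2.2 • (θ • (1 : Matrix (Fin n) (Fin n) ℝ)
        - Matrix.vecMulVec q.2.1 q.2.1)) < sigmaK k q.1 := by
  obtain ⟨p, hp⟩ := hgc_sigma_eval (n := n) k
  set f : (Fin n × Fin n → ℝ) → ℝ := fun z => MvPolynomial.eval z p with hfdef
  set c : Matrix (Fin n) (Fin n) ℝ → (Fin n × Fin n → ℝ) := fun M q => M q.1 q.2 with hcdef
  have hcc : Continuous c := continuous_pi fun q => continuous_id.matrix_elem _ _
  have hadd : ∀ A B, c (A + B) = c A + c B := fun A B => rfl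
  have hsmul : ∀ (a : ℝ) B, c (a • B) = a • c B := fun A B => rfl
  have hfa : AnalyticAt ℝ f (c M₀) := AnalyticOnNhd.eval_mvPolynomial p _ (mem_univ _)
  have hfs : HasStrictFDerivAt f (fderiv ℝ f (c M₀)) (c M₀) := hfa.hasStrictFDerivAt
  set D := fderiv ℝ f (c M₀) with hD
  set L := sigmaK k (M₀ + Matrix.vecMulVec e₀ e₀) - sigmaK k M₀ with hL
  have hLpos : 0 < L := hgc_L_pos k hk hkn M₀ hM hc e₀ he
  have hDL : D (c (Matrix.vecMulVec e₀ e₀)) = L := by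
    have h1 : HasDerivAt (fun t : ℝ => f (c M₀ + t • c (Matrix.vecMulVec e₀ e₀)))
        (D (c (Matrix.vecMulVec e₀ e₀))) 0 := by
      have h2 : HasDerivAt (fun t : ℝ => c M₀ + t • c (Matrix.vecMulVec e₀ e₀))
          (c (Matrix.vecMulVec e₀ e₀)) 0 := by
        simpa using ((hasDerivAt_id (0:ℝ)).smul_const (c (Matrix.vecMulVec e₀ e₀))).const_add (c M₀)
      have h3 : HasFDerivAt f D (c M₀ + (0:ℝ) • c (Matrix.vecMulVec e₀ e₀)) := by
        simpa using hfs.hasFDerivAt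
      exact h3.comp_hasDerivAt (0:ℝ) h2
    have h4 : HasDerivAt (fun t : ℝ => f (c M₀ + t • c (Matrix.vecMulVec e₀ e₀))) L 0 := by
      have : (fun t : ℝ => f (c M₀ + t • c (Matrix.vecMulVec e₀ e₀)))
          = fun t => sigmaK k M₀ + t * L := by
        funext t
        rw [← hsmul, ← hadd, ← hgc_sigma_affine, hp]
      rw [this]
      simpa using ((hasDerivAt_id (0:ℝ)).mul_const L).const_add (sigmaK k M₀)
    exact h1.unique h4
  -- choose θ
  set a := D (c 1) with ha
  set θ := L / (4 * (|a| + 1)) with hθ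
  have hθpos : 0 < θ := by positivity
  have hθa : θ * a ≤ L / 4 := by
    have : a ≤ |a| := le_abs_self a
    calc θ * a ≤ θ * (|a| + 1) := by gcongr; linarith
      _ = L / 4 := by rw [hθ]; field_simp
  refine ⟨θ, hθpos, ?_⟩
  set E : (Fin n → ℝ) → Matrix (Fin n) (Fin n) ℝ := fun e => θ • 1 - Matrix.vecMulVec e e with hE
  have hEc : Continuous E := by
    simp only [hE]
    apply continuous_const.sub
    exact continuous_id.matrix_vecMulVec continuous_id
  have hDE0 : D (c (E e₀)) < - (L / 2) := by
    have : c (E e₀) = θ • c 1 - c (Matrix.vecMulVec e₀ e₀) := rfl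
    rw [this, map_sub, map_smul, hDL, smul_eq_mul, ← ha]
    linarith
  -- strict differentiability
  set K := ‖c (E e₀)‖ + 1 with hK
  have hKpos : 0 < K := by positivity
  have hlo := hfs.isLittleO.def (show 0 < L / (4 * K) by positivity)
  have hev1 : ∀ᶠ q : Matrix (Fin n) (Fin n) ℝ × (Fin n → ℝ) × ℝ in 𝓝 (M₀, e₀, 0),
      ‖c (E q.2.1)‖ < K := by
    have : Continuous (fun q : Matrix (Fin n) (Fin n) ℝ × (Fin n → ℝ) × ℝ => ‖c (E q.2.1)‖) := by
      fun_prop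
    refine this.continuousAt.eventually (gt_mem_nhds ?_)
    simp [hK]
  have hev2 : ∀ᶠ q : Matrix (Fin n) (Fin n) ℝ × (Fin n → ℝ) × ℝ in 𝓝 (M₀, e₀, 0),
      D (c (E q.2.1)) < - (L / 2) := by
    have : Continuous (fun q : Matrix (Fin n) (Fin n) ℝ × (Fin n → ℝ) × ℝ => D (c (E q.2.1))) := by
      fun_prop
    exact this.continuousAt.eventually (gt_mem_nhds hDE0)
  have hmap : Tendsto (fun q : Matrix (Fin n) (Fin n) ℝ × (Fin n → ℝ) × ℝ =>
      (c (q.1 + q.2.2 • E q.2.1), c q.1)) (𝓝 (M₀, e₀, 0)) (𝓝 (c M₀, c M₀)) := by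
    have : Continuous (fun q : Matrix (Fin n) (Fin n) ℝ × (Fin n → ℝ) × ℝ =>
      (c (q.1 + q.2.2 • E q.2.1), c q.1)) := by fun_prop
    have h := this.tendsto (M₀, e₀, 0)
    simpa using h
  filter_upwards [hev1, hev2, hmap.eventually hlo] with q h1 h2 h3 hq
  simp only [hp]
  change f (c (q.1 + q.2.2 • E q.2.1)) < f (c q.1)
  have h4 : c (q.1 + q.2.2 • E q.2.1) - c q.1 = q.2.2 • c (E q.2.1) := by
    rw [hadd, hsmul]; abel
  rw [h4, map_smul, norm_smul, smul_eq_mul, Real.norm_eq_abs, Real.norm_eq_abs, abs_of_pos hq] at h3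
  have h5 := (abs_le.1 h3).2
  have h6 : L / (4 * K) * (q.2.2 * ‖c (E q.2.1)‖) ≤ q.2.2 * (L / 4) := by
    calc L / (4 * K) * (q.2.2 * ‖c (E q.2.1)‖) ≤ L / (4 * K) * (q.2.2 * K) := by gcongr
      _ = q.2.2 * (L / 4) := by field_simp
  have h7 : q.2.2 * D (c (E q.2.1)) < q.2.2 * (-(L/2)) := by gcongr
  have h8 : 0 < q.2.2 * L := by positivity
  linarith


/-- Second derivative in two directions. -/
noncomputable def hgcD2 {n : ℕ} (u : EuclideanSpace ℝ (Fin n) → ℝ)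
    (x a b : EuclideanSpace ℝ (Fin n)) : ℝ :=
  fderiv ℝ (fun y => fderiv ℝ u y b) x a

/-- The matrix `u ∇²u - ½ |∇u|² I`. -/
noncomputable def hgcB {n : ℕ} (u : EuclideanSpace ℝ (Fin n) → ℝ)
    (x : EuclideanSpace ℝ (Fin n)) : Matrix (Fin n) (Fin n) ℝ :=
  fun i j => u x * pd (pd u j) i x
    - 1 / 2 * (∑ l, (pd u l x) ^ 2) * (if i = j then (1 : ℝ) else 0)

lemma hgc_diff_fderiv {n : ℕ} {u : EuclideanSpace ℝ (Fin n) → ℝ} {x : EuclideanSpace ℝ (Fin n)}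
    (hu : ContDiffAt ℝ 2 u x) : DifferentiableAt ℝ (fderiv ℝ u) x :=
  (hu.fderiv_right (m := 1) (by norm_num)).differentiableAt (by norm_num)

lemma hgc_D2_eq {n : ℕ} {u : EuclideanSpace ℝ (Fin n) → ℝ} {x : EuclideanSpace ℝ (Fin n)}
    (hu : ContDiffAt ℝ 2 u x) (a b : EuclideanSpace ℝ (Fin n)) :
    hgcD2 u x a b = fderiv ℝ (fderiv ℝ u) x a b := by
  have h := ((hgc_diff_fderiv hu).hasFDerivAt.clm_apply (hasFDerivAt_const b x)).fderiv
  rw [hgcD2, h]; simp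

lemma hgc_D2_symm {n : ℕ} {u : EuclideanSpace ℝ (Fin n) → ℝ} {x : EuclideanSpace ℝ (Fin n)}
    (hu : ContDiffAt ℝ 2 u x) (a b : EuclideanSpace ℝ (Fin n)) :
    hgcD2 u x a b = hgcD2 u x b a := by
  rw [hgc_D2_eq hu, hgc_D2_eq hu]
  exact hu.isSymmSndFDerivAt (by simp) a b

lemma hgc_fderiv_grad {n : ℕ} (u : EuclideanSpace ℝ (Fin n) → ℝ) (x a : EuclideanSpace ℝ (Fin n)) :
    fderiv ℝ u x a = inner ℝ (gradient u x) a := by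
  simp [gradient]

lemma hgc_pd_grad {n : ℕ} (u : EuclideanSpace ℝ (Fin n) → ℝ) (x : EuclideanSpace ℝ (Fin n))
    (i : Fin n) : pd u i x = gradient u x i := by
  rw [pd, hgc_fderiv_grad, EuclideanSpace.inner_single_right]; simp

lemma hgc_sum_pd {n : ℕ} (u : EuclideanSpace ℝ (Fin n) → ℝ) (x : EuclideanSpace ℝ (Fin n)) :
    ∑ l, (pd u l x) ^ 2 = ‖gradient u x‖ ^ 2 := by
  rw [EuclideanSpace.norm_sq_eq]; simp [hgc_pd_grad]

lemma hgc_B_herm {n : ℕ} {u : EuclideanSpace ℝ (Fin n) → ℝ} {x : EuclideanSpace ℝ (Fin n)}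
    (hu : ContDiffAt ℝ 2 u x) : (hgcB u x).IsHermitian := by
  ext i j
  simp only [Matrix.conjTranspose_apply, star_trivial, hgcB]
  have : pd (pd u i) j x = pd (pd u j) i x := hgc_D2_symm hu _ _
  rw [this]
  simp [eq_comm]

lemma hgc_sum_single {n : ℕ} (a : EuclideanSpace ℝ (Fin n)) :
    ∑ i, a i • EuclideanSpace.single i (1:ℝ) = a := by
  ext j
  simp [Pi.single_apply]

lemma hgc_B_bilin {n : ℕ} {u : EuclideanSpace ℝ (Fin n) → ℝ} {x : EuclideanSpace ℝ (Fin n)}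
    (hu : ContDiffAt ℝ 2 u x) (a b : EuclideanSpace ℝ (Fin n)) :
    ∑ i, ∑ j, a i * hgcB u x i j * b j
      = u x * hgcD2 u x a b - 1 / 2 * ‖gradient u x‖ ^ 2 * inner ℝ a b := by
  have h1 : hgcD2 u x a b = ∑ i, ∑ j, a i * pd (pd u j) i x * b j := by
    rw [hgc_D2_eq hu]
    conv_lhs => rw [← hgc_sum_single a, ← hgc_sum_single b]
    simp only [map_sum, map_smul, sum_apply, smul_apply, smul_eq_mul]
    rw [Finset.sum_comm (f := fun i j => a i * pd (pd u j) i x * b j)]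
    refine Finset.sum_congr rfl fun i _ => ?_
    rw [Finset.mul_sum]
    refine Finset.sum_congr rfl fun j _ => ?_
    rw [← hgc_D2_eq hu]
    change b i * (a j * pd (pd u i) j x) = _
    ring
  have h2 : inner ℝ a b = ∑ i, a i * b i := by
    rw [PiLp.inner_apply]; simp [mul_comm]
  have h3 : ∀ i, ∑ j, a i * hgcB u x i j * b j = u x * ∑ j, a i * pd (pd u j) i x * b j
      - 1 / 2 * ‖gradient u x‖ ^ 2 * (a i * b i) := by
    intro i
    simp only [hgcB, hgc_sum_pd]
    rw [Finset.mul_sum]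
    rw [show a i * b i = ∑ j, if i = j then a i * b j else 0 by simp, Finset.mul_sum,
      ← Finset.sum_sub_distrib]
    refine Finset.sum_congr rfl fun j _ => ?_
    split_ifs <;> ring
  simp_rw [h3]
  rw [Finset.sum_sub_distrib, ← Finset.mul_sum, ← Finset.mul_sum, h1, h2]

lemma hgc_B_quad {n : ℕ} {u : EuclideanSpace ℝ (Fin n) → ℝ} {x : EuclideanSpace ℝ (Fin n)}
    (hu : ContDiffAt ℝ 2 u x) (a : EuclideanSpace ℝ (Fin n)) :
    dotProduct (a : Fin n → ℝ) (Matrix.mulVec (hgcB u x) a)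
      = u x * hgcD2 u x a a - 1 / 2 * ‖gradient u x‖ ^ 2 * ‖a‖ ^ 2 := by
  rw [← real_inner_self_eq_norm_sq a, ← hgc_B_bilin hu]
  simp only [dotProduct, Matrix.mulVec, Finset.mul_sum, mul_assoc]

lemma hgc_gradient_cont {n : ℕ} {u : EuclideanSpace ℝ (Fin n) → ℝ} {x : EuclideanSpace ℝ (Fin n)}
    (hu : ContDiffAt ℝ 2 u x) : ContinuousAt (gradient u) x := by
  have : ContinuousAt (fderiv ℝ u) x := (hgc_diff_fderiv hu).continuousAt
  exact (LinearIsometryEquiv.continuous _).continuousAt.comp this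

lemma hgc_fderiv2_cont {n : ℕ} {u : EuclideanSpace ℝ (Fin n) → ℝ} {x : EuclideanSpace ℝ (Fin n)}
    (hu : ContDiffAt ℝ 2 u x) : ContinuousAt (fderiv ℝ (fderiv ℝ u)) x :=
  ((hu.fderiv_right (m := 1) (by norm_num)).fderiv_right (m := 0) (by norm_num)).continuousAt

open Topology in
lemma hgc_C2_ev {n : ℕ} {u : EuclideanSpace ℝ (Fin n) → ℝ} {x : EuclideanSpace ℝ (Fin n)}
    (hu : ContDiffAt ℝ 2 u x) : ∀ᶠ y in 𝓝 x, ContDiffAt ℝ 2 u y :=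
  hu.eventually (by simp)

lemma hgc_B_cont {n : ℕ} {u : EuclideanSpace ℝ (Fin n) → ℝ} {x : EuclideanSpace ℝ (Fin n)}
    (hu : ContDiffAt ℝ 2 u x) : ContinuousAt (hgcB u) x := by
  refine continuousAt_pi.2 fun i => continuousAt_pi.2 fun j => ?_
  have h1 : ContinuousAt (fun y => pd (pd u j) i y) x := by
    have h := ((hgc_fderiv2_cont hu).clm_apply (continuousAt_const
      (y := EuclideanSpace.single i (1:ℝ)))).clm_apply (continuousAt_const
      (y := EuclideanSpace.single j (1:ℝ)))
    refine h.congr ?_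
    filter_upwards [hgc_C2_ev hu] with y hy
    rw [← hgc_D2_eq hy]; rfl
  have h2 : ContinuousAt (fun y => ∑ l, (pd u l y) ^ 2) x := by
    simp_rw [hgc_sum_pd]
    exact ((hgc_gradient_cont hu).norm).pow 2
  exact (hu.continuousAt.mul h1).sub ((continuousAt_const.mul h2).mul continuousAt_const)

-- second derivative test
open Topology in
lemma hgc_line_deriv {n : ℕ} {u : EuclideanSpace ℝ (Fin n) → ℝ} {x : EuclideanSpace ℝ (Fin n)}
    (hu : ContDiffAt ℝ 2 u x) (a : EuclideanSpace ℝ (Fin n)) :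
    (deriv (fun t : ℝ => u (x + t • a)) =ᶠ[𝓝 0] fun t => fderiv ℝ u (x + t • a) a) ∧
    HasDerivAt (fun t : ℝ => fderiv ℝ u (x + t • a) a) (hgcD2 u x a a) 0 := by
  have hline : ∀ t : ℝ, HasDerivAt (fun t : ℝ => x + t • a) a t := by
    intro t
    simpa using ((hasDerivAt_id t).smul_const a).const_add x
  have hc : Tendsto (fun t : ℝ => x + t • a) (𝓝 0) (𝓝 x) := by
    have := (hline 0).continuousAt.tendsto
    simpa using this
  constructor
  · filter_upwards [hc.eventually (hgc_C2_ev hu)] with t ht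
    exact ((ht.differentiableAt (by norm_num)).hasFDerivAt.comp_hasDerivAt t (hline t)).deriv
  · have h1 : HasFDerivAt (fderiv ℝ u) (fderiv ℝ (fderiv ℝ u) x) (x + (0:ℝ) • a) := by
      simpa using (hgc_diff_fderiv hu).hasFDerivAt
    have h2 := h1.comp_hasDerivAt (0:ℝ) (hline 0)
    have h3 := h2.clm_apply (hasDerivAt_const (0:ℝ) a)
    rw [hgc_D2_eq hu]
    simpa using h3

lemma hgc_deriv2 {n : ℕ} {u : EuclideanSpace ℝ (Fin n) → ℝ} {x : EuclideanSpace ℝ (Fin n)}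
    (hu : ContDiffAt ℝ 2 u x) (a : EuclideanSpace ℝ (Fin n)) :
    deriv (deriv (fun t : ℝ => u (x + t • a))) 0 = hgcD2 u x a a := by
  obtain ⟨h1, h2⟩ := hgc_line_deriv hu a
  rw [h1.deriv_eq, h2.deriv]

open Topology in
lemma hgc_localmin {n : ℕ} {u : EuclideanSpace ℝ (Fin n) → ℝ} {x : EuclideanSpace ℝ (Fin n)}
    (hu : ContDiffAt ℝ 2 u x) (hm : IsLocalMin u x) (a : EuclideanSpace ℝ (Fin n)) :
    0 ≤ hgcD2 u x a a := by
  by_contra hneg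
  push Not at hneg
  have hc : ContinuousAt (fun t : ℝ => x + t • a) 0 := by fun_prop
  have hc' : Tendsto (fun t : ℝ => x + t • a) (𝓝 0) (𝓝 x) := by simpa using hc.tendsto
  have hmin : IsLocalMin (fun t : ℝ => u (x + t • a)) 0 := by
    have := hc'.eventually hm
    simpa [IsLocalMin, IsMinFilter] using this
  have hd : deriv (fun t : ℝ => u (x + t • a)) 0 = 0 := hmin.deriv_eq_zero
  have hcont : ContinuousAt (fun t : ℝ => u (x + t • a)) 0 := by
    apply ContinuousAt.comp (g := u)
    · simpa using hu.continuousAt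
    · exact hc
  rw [← hgc_deriv2 hu] at hneg
  have hmax := isLocalMax_of_deriv_deriv_neg hneg hd hcont
  have heq : (fun t : ℝ => u (x + t • a)) =ᶠ[𝓝 0] fun _ => u (x + (0:ℝ) • a) := by
    filter_upwards [hmin, hmax] with t h1 h2
    exact le_antisymm h2 h1
  have h0 : deriv (deriv (fun t : ℝ => u (x + t • a))) 0 = 0 := by
    rw [heq.deriv.deriv_eq]; simp
  linarith

lemma hgc_D2_sub {n : ℕ} {u w : EuclideanSpace ℝ (Fin n) → ℝ} {x : EuclideanSpace ℝ (Fin n)}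
    (hu : ContDiffAt ℝ 2 u x) (hw : ContDiffAt ℝ 2 w x) (a b : EuclideanSpace ℝ (Fin n)) :
    hgcD2 (fun y => u y - w y) x a b = hgcD2 u x a b - hgcD2 w x a b := by
  rw [hgc_D2_eq (hu.sub hw), hgc_D2_eq hu, hgc_D2_eq hw]
  have h : fderiv ℝ (fun y => u y - w y) =ᶠ[nhds x] fun y => fderiv ℝ u y - fderiv ℝ w y := by
    filter_upwards [hgc_C2_ev hu, hgc_C2_ev hw] with y h1 h2
    exact fderiv_fun_sub (h1.differentiableAt (by norm_num)) (h2.differentiableAt (by norm_num))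
  rw [h.fderiv_eq, fderiv_fun_sub (hgc_diff_fderiv hu) (hgc_diff_fderiv hw)]
  rfl



lemma hgc_h_hasFDeriv {n : ℕ} (z : EuclideanSpace ℝ (Fin n)) (ρ α : ℝ)
    (y a : EuclideanSpace ℝ (Fin n)) :
    fderiv ℝ (fun y : EuclideanSpace ℝ (Fin n) => (ρ ^ 2 - ‖y - z‖ ^ 2) + α * (ρ ^ 2 - ‖y - z‖ ^ 2) ^ 2) y a
      = (1 + 2 * α * (ρ ^ 2 - ‖y - z‖ ^ 2)) * (-2 * inner ℝ (y - z) a) := by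
  have h0 : HasFDerivAt (fun y : EuclideanSpace ℝ (Fin n) => y - z)
    (ContinuousLinearMap.id ℝ (EuclideanSpace ℝ (Fin n))) y := (hasFDerivAt_id y).sub_const z
  have h1 := (h0.norm_sq).const_sub (ρ ^ 2)
  have h2 := h1.add ((h1.pow 2).const_mul α)
  have h3 : HasFDerivAt (fun y : EuclideanSpace ℝ (Fin n) => (ρ ^ 2 - ‖y - z‖ ^ 2) + α * (ρ ^ 2 - ‖y - z‖ ^ 2) ^ 2) _ y := h2
  rw [h3.fderiv]
  simp [inner_sub_left]
  ring

lemma hgc_h_D2 {n : ℕ} (z : EuclideanSpace ℝ (Fin n)) (ρ α : ℝ)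
    (y a : EuclideanSpace ℝ (Fin n)) :
    hgcD2 (fun y : EuclideanSpace ℝ (Fin n) => (ρ ^ 2 - ‖y - z‖ ^ 2) + α * (ρ ^ 2 - ‖y - z‖ ^ 2) ^ 2) y a a
      = 8 * α * (inner ℝ (y - z) a) ^ 2 - (2 + 4 * α * (ρ ^ 2 - ‖y - z‖ ^ 2)) * ‖a‖ ^ 2 := by
  unfold hgcD2
  simp_rw [hgc_h_hasFDeriv]
  have h0 : HasFDerivAt (fun y : EuclideanSpace ℝ (Fin n) => y - z)
    (ContinuousLinearMap.id ℝ (EuclideanSpace ℝ (Fin n))) y := (hasFDerivAt_id y).sub_const z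
  have h1 := (((h0.norm_sq).const_sub (ρ ^ 2)).const_mul (2 * α)).const_add 1
  have h2 := (h0.inner ℝ (hasFDerivAt_const a y)).const_mul (-2)
  have h3 := h1.mul h2
  have h4 : HasFDerivAt (fun y : EuclideanSpace ℝ (Fin n) => (1 + 2 * α * (ρ ^ 2 - ‖y - z‖ ^ 2)) * (-2 * inner ℝ (y - z) a)) _ y := h3
  rw [h4.fderiv]
  simp [inner_sub_left]
  ring

lemma hgc_h_contDiff {n : ℕ} (z : EuclideanSpace ℝ (Fin n)) (ρ α : ℝ) :
    ContDiff ℝ 2 (fun y : EuclideanSpace ℝ (Fin n) => (ρ ^ 2 - ‖y - z‖ ^ 2) + α * (ρ ^ 2 - ‖y - z‖ ^ 2) ^ 2) := by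
  have h1 : ContDiff ℝ 2 (fun y : EuclideanSpace ℝ (Fin n) => ‖y - z‖ ^ 2) :=
    (contDiff_id.sub contDiff_const).norm_sq ℝ
  exact (contDiff_const.sub h1).add (contDiff_const.mul ((contDiff_const.sub h1).pow 2))

lemma hgc_D2_smul {n : ℕ} {u : EuclideanSpace ℝ (Fin n) → ℝ} {x : EuclideanSpace ℝ (Fin n)}
    (hu : ContDiffAt ℝ 2 u x) (ε : ℝ) (a : EuclideanSpace ℝ (Fin n)) :
    hgcD2 (fun y => ε * u y) x a a = ε * hgcD2 u x a a := by
  unfold hgcD2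
  have h : (fun y => fderiv ℝ (fun y => ε * u y) y a) =ᶠ[nhds x] fun y => ε * fderiv ℝ u y a := by
    filter_upwards [hgc_C2_ev hu] with y hy
    rw [fderiv_const_mul (hy.differentiableAt (by norm_num))]; rfl
  have hd : DifferentiableAt ℝ (fun y => fderiv ℝ u y a) x :=
    (hgc_diff_fderiv hu).clm_apply (differentiableAt_const a)
  rw [h.fderiv_eq, fderiv_const_mul hd]
  rfl

set_option maxHeartbeats 800000 in
lemma hgc_contact {n : ℕ} {u w : EuclideanSpace ℝ (Fin n) → ℝ} {x z : EuclideanSpace ℝ (Fin n)}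
    (hu : ContDiffAt ℝ 2 u x) (hw : ContDiffAt ℝ 2 w x) {ρ α ε K G m U θ d h : ℝ}
    (hd : d = ρ ^ 2 - ‖x - z‖ ^ 2) (hh : h = d + α * d ^ 2)
    (hmin : IsLocalMin (fun y => u y - w y - ε * ((ρ ^ 2 - ‖y - z‖ ^ 2) + α * (ρ ^ 2 - ‖y - z‖ ^ 2) ^ 2)) x)
    (hε : 0 ≤ ε) (hα : 0 ≤ α) (hρ : 0 ≤ ρ) (hd0 : 0 ≤ d) (hαd : α * d ≤ 1) (hxz : ‖x - z‖ ≤ ρ)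
    (huw : 0 ≤ u x - w x) (huw' : u x - w x ≤ ε * h) (hK : 0 ≤ K)
    (hD : ∀ a, -K * ‖a‖ ^ 2 ≤ hgcD2 u x a a) (hG : ‖gradient u x‖ ≤ G)
    (hm : 0 < m) (hmw : m ≤ w x) (hwU : w x ≤ U)
    (hθ : 8 * α * m * θ = 2 * ρ ^ 2 * K + 6 * U + 6 * ρ * G) :
    ((hgcB u x + (8 * α * m * ε) • (θ • (1 : Matrix (Fin n) (Fin n) ℝ)
      - Matrix.vecMulVec (x - z : EuclideanSpace ℝ (Fin n)) (x - z : EuclideanSpace ℝ (Fin n)))) - hgcB w x).PosSemidef := by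
  have hhC := (hgc_h_contDiff z ρ α).contDiffAt (x := x)
  have hεh : ContDiffAt ℝ 2 (fun y : EuclideanSpace ℝ (Fin n) => ε * ((ρ ^ 2 - ‖y - z‖ ^ 2) + α * (ρ ^ 2 - ‖y - z‖ ^ 2) ^ 2)) x :=
    contDiffAt_const.mul hhC
  have huwC : ContDiffAt ℝ 2 (fun y => u y - w y) x := hu.sub hw
  have hgrad : ∀ a, fderiv ℝ w x a = fderiv ℝ u x a - ε * ((1 + 2 * α * d) * (-2 * inner ℝ (x - z) a)) := by
    intro a
    have h1 := hmin.fderiv_eq_zero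
    have hdu := hu.differentiableAt (by norm_num)
    have hdw := hw.differentiableAt (by norm_num)
    have hdh := hhC.differentiableAt (by norm_num)
    rw [fderiv_fun_sub (huwC.differentiableAt (by norm_num)) (hεh.differentiableAt (by norm_num)),
      fderiv_fun_sub hdu hdw, fderiv_const_mul hdh] at h1
    have h2 := congrArg (fun f => f a) h1
    simp only [sub_apply, smul_apply, zero_apply, smul_eq_mul] at h2
    rw [hgc_h_hasFDeriv, ← hd] at h2
    linarith
  have hgradw : gradient w x = gradient u x + (ε * (2 * (1 + 2 * α * d))) • (x - z) := by
    refine ext_inner_right ℝ fun a => ?_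
    rw [← hgc_fderiv_grad, hgrad, inner_add_left, ← hgc_fderiv_grad, real_inner_smul_left]
    ring
  have hnorm : ‖gradient u x‖ ^ 2 - 12 * ε * ρ * G ≤ ‖gradient w x‖ ^ 2 := by
    rw [hgradw, norm_add_sq_real, real_inner_smul_right]
    have h1 : |inner ℝ (gradient u x) (x - z)| ≤ G * ρ :=
      (abs_real_inner_le_norm _ _).trans (mul_le_mul hG hxz (norm_nonneg _) ((norm_nonneg _).trans hG))
    have h2 := (abs_le.1 h1).1
    have h3 : 0 ≤ ε * (2 * (1 + 2 * α * d)) := by positivity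
    have h4 : ε * (2 * (1 + 2 * α * d)) ≤ ε * 6 := mul_le_mul_of_nonneg_left (by linarith) hε
    have hGρ : 0 ≤ G * ρ := (abs_nonneg _).trans h1
    have h5 := mul_le_mul_of_nonneg_left h2 h3
    have h6 := mul_le_mul_of_nonneg_right h4 hGρ
    have h7 := sq_nonneg ‖(ε * (2 * (1 + 2 * α * d))) • (x - z)‖
    nlinarith
  have hD2 : ∀ a, hgcD2 w x a a ≤ hgcD2 u x a a - ε * (8 * α * (inner ℝ (x - z) a) ^ 2 - (2 + 4 * α * d) * ‖a‖ ^ 2) := by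
    intro a
    have h1 := hgc_localmin (huwC.sub hεh) hmin a
    rw [hgc_D2_sub huwC hεh, hgc_D2_sub hu hw, hgc_D2_smul hhC, hgc_h_D2, ← hd] at h1
    linarith
  refine Matrix.PosSemidef.of_dotProduct_mulVec_nonneg ?_ ?_
  · refine ((hgc_B_herm hu).add ?_).sub (hgc_B_herm hw)
    ext i j
    simp [Matrix.vecMulVec_apply, Matrix.one_apply, mul_comm, eq_comm]
  · intro a0
    set a : EuclideanSpace ℝ (Fin n) := WithLp.toLp 2 a0 with ha
    have ha0 : a0 = (a : Fin n → ℝ) := rfl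
    have q1 := hgc_B_quad hu a
    have q2 := hgc_B_quad hw a
    have q3 : dotProduct (a : Fin n → ℝ) (Matrix.mulVec (Matrix.vecMulVec (x - z : EuclideanSpace ℝ (Fin n)) (x - z : EuclideanSpace ℝ (Fin n))) a) = (inner ℝ (x - z) a) ^ 2 := by
      have : inner ℝ (x - z) a = dotProduct (a : Fin n → ℝ) (x - z : EuclideanSpace ℝ (Fin n)) := by
        simp [PiLp.inner_apply, dotProduct]
      rw [this, Matrix.vecMulVec_mulVec, dotProduct_comm (x - z : EuclideanSpace ℝ (Fin n)).ofLp]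
      simp [dotProduct_smul, sq]
    have q4 : dotProduct (a : Fin n → ℝ) (a : Fin n → ℝ) = ‖a‖ ^ 2 := by
      rw [EuclideanSpace.norm_sq_eq]; simp [dotProduct, sq]
    rw [star_trivial, ha0, Matrix.sub_mulVec, Matrix.add_mulVec, Matrix.smul_mulVec, Matrix.sub_mulVec,
      Matrix.smul_mulVec, Matrix.one_mulVec, dotProduct_sub, dotProduct_add, dotProduct_smul,
      dotProduct_sub, dotProduct_smul, q1, q2, q3, q4]
    simp only [smul_eq_mul]
    have hw0 : 0 < w x := hm.trans_le hmw
    have e1 := mul_le_mul_of_nonneg_left (hD2 a) hw0.le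
    have e2 := mul_le_mul_of_nonneg_right hnorm (sq_nonneg ‖a‖)
    have e3 : -(u x - w x) * hgcD2 u x a a ≤ ε * (2 * ρ ^ 2) * K * ‖a‖ ^ 2 := by
      have f1 := mul_le_mul_of_nonneg_left (hD a) huw
      have f2 : h ≤ 2 * ρ ^ 2 := by
        have : α * d ^ 2 ≤ d := by nlinarith
        have : d ≤ ρ ^ 2 := by rw [hd]; nlinarith [sq_nonneg ‖x - z‖]
        linarith
      have f3 := mul_le_mul_of_nonneg_left f2 hε
      have f4 : (u x - w x) * (K * ‖a‖ ^ 2) ≤ (ε * (2 * ρ ^ 2)) * (K * ‖a‖ ^ 2) :=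
        mul_le_mul_of_nonneg_right (huw'.trans f3) (by positivity)
      linarith
    have e4 : w x * (ε * ((2 + 4 * α * d) * ‖a‖ ^ 2)) ≤ U * (ε * (6 * ‖a‖ ^ 2)) := by
      apply mul_le_mul hwU _ (by positivity) (hw0.le.trans hwU)
      apply mul_le_mul_of_nonneg_left _ hε
      apply mul_le_mul_of_nonneg_right _ (by positivity)
      linarith
    have e5 : m * (ε * (8 * α * (inner ℝ (x - z) a) ^ 2)) ≤ w x * (ε * (8 * α * (inner ℝ (x - z) a) ^ 2)) :=
      mul_le_mul_of_nonneg_right hmw (by positivity)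
    have e6 : 8 * α * m * ε * (θ * ‖a‖ ^ 2 - (inner ℝ (x - z) a) ^ 2) = ε * (2 * ρ ^ 2 * K + 6 * U + 6 * ρ * G) * ‖a‖ ^ 2 - m * (ε * (8 * α * (inner ℝ (x - z) a) ^ 2)) := by
      rw [← hθ]; ring
    rw [e6]
    linarith


open Topology in
lemma hgc_ball_sub {n : ℕ} {x0 y : EuclideanSpace ℝ (Fin n)}
    (hy : ‖y - (1 / 2 : ℝ) • x0‖ ≤ ‖x0‖ / 2) (hne : y ≠ x0) : ‖y‖ < ‖x0‖ := by
  have h1 : ‖y - (1 / 2 : ℝ) • x0‖ ^ 2 ≤ (‖x0‖ / 2) ^ 2 := by gcongr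
  rw [norm_sub_sq_real, real_inner_smul_right, norm_smul] at h1
  have h2 : 0 < ‖y - x0‖ ^ 2 := by
    have := norm_pos_iff.2 (sub_ne_zero.2 hne)
    positivity
  rw [norm_sub_sq_real] at h2
  norm_num at h1
  have h3 : ‖y‖ ^ 2 < ‖x0‖ ^ 2 := by nlinarith
  exact lt_of_pow_lt_pow_left₀ 2 (norm_nonneg _) h3

lemma hgc_fderiv2_norm {n : ℕ} {u : EuclideanSpace ℝ (Fin n) → ℝ} {x : EuclideanSpace ℝ (Fin n)}
    (hu : ContDiffAt ℝ 2 u x) : ContinuousAt (fun y => ‖fderiv ℝ (fderiv ℝ u) y‖) x := by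
  have hc : Continuous (fun L : (EuclideanSpace ℝ (Fin n)) →L[ℝ] (EuclideanSpace ℝ (Fin n)) →L[ℝ] ℝ =>
      ‖L‖) := @continuous_norm ((EuclideanSpace ℝ (Fin n)) →L[ℝ] (EuclideanSpace ℝ (Fin n)) →L[ℝ] ℝ) _
  exact hc.continuousAt.comp (hgc_fderiv2_cont hu)

set_option maxHeartbeats 1600000 in
open Topology in
lemma hgc_hopf {n k : ℕ} (hk : 1 ≤ k) (hkn : k ≤ n) {u w : EuclideanSpace ℝ (Fin n) → ℝ}
    {x0 : EuclideanSpace ℝ (Fin n)} (hx0 : x0 ≠ 0)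
    (hlt : ∀ y, ‖y‖ < ‖x0‖ → w y < u y) (heq : w x0 = u x0) (hpos : 0 < u x0)
    (hu : ContDiffAt ℝ 2 u x0) (hw : ContDiffAt ℝ 2 w x0)
    (hG : gammaKPlus k (hgcB u x0))
    (hσ : ∀ᶠ y in 𝓝 x0, sigmaK k (hgcB w y) = sigmaK k (hgcB u y))
    (hM : ∀ᶠ y in 𝓝 x0, hgcMono k (hgcB w y)) :
    fderiv ℝ u x0 x0 - fderiv ℝ w x0 x0 < 0 := by
  obtain ⟨z, hz⟩ : ∃ z, z = (1 / 2 : ℝ) • x0 := ⟨_, rfl⟩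
  obtain ⟨ρ, hρ⟩ : ∃ ρ, ρ = ‖x0‖ / 2 := ⟨_, rfl⟩
  have hx0n : 0 < ‖x0‖ := norm_pos_iff.2 hx0
  have hρ0 : 0 < ρ := by rw [hρ]; positivity
  have hx0z : x0 - z = (1 / 2 : ℝ) • x0 := by rw [hz]; module
  have hx0zn : ‖x0 - z‖ = ρ := by rw [hx0z, norm_smul, hρ]; norm_num; ring
  obtain ⟨m, hm⟩ : ∃ m, m = u x0 / 2 := ⟨_, rfl⟩
  obtain ⟨U, hU⟩ : ∃ U, U = 2 * u x0 := ⟨_, rfl⟩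
  obtain ⟨G, hGd⟩ : ∃ G, G = ‖gradient u x0‖ + 1 := ⟨_, rfl⟩
  obtain ⟨K, hK⟩ : ∃ K, K = ‖fderiv ℝ (fderiv ℝ u) x0‖ + 1 := ⟨_, rfl⟩
  have hm0 : 0 < m := by rw [hm]; positivity
  have hU0 : 0 < U := by rw [hU]; positivity
  have hG0 : 0 < G := by rw [hGd]; positivity
  have hK0 : 0 < K := by rw [hK]; positivity
  have he0 : ((x0 - z : EuclideanSpace ℝ (Fin n)) : Fin n → ℝ) ≠ 0 := by
    intro h
    have : x0 - z = 0 := by ext i; simpa using congrFun h i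
    rw [this] at hx0zn
    simp at hx0zn; linarith
  obtain ⟨θ, hθ, hell⟩ := hgc_elliptic k hk hkn (hgcB u x0) (hgc_B_herm hu) hG _ he0
  obtain ⟨α, hα⟩ : ∃ α, α = (2 * ρ ^ 2 * K + 6 * U + 6 * ρ * G) / (8 * m * θ) := ⟨_, rfl⟩
  have hα0 : 0 < α := by rw [hα]; positivity
  have hαθ : 8 * α * m * θ = 2 * ρ ^ 2 * K + 6 * U + 6 * ρ * G := by
    rw [hα]; field_simp
  -- elliptic estimate near x0
  have hell2 : ∀ᶠ q : EuclideanSpace ℝ (Fin n) × ℝ in 𝓝 x0 ×ˢ 𝓝 0,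
      0 < q.2 → sigmaK k (hgcB u q.1 + q.2 • (θ • (1 : Matrix (Fin n) (Fin n) ℝ)
        - Matrix.vecMulVec (q.1 - z : EuclideanSpace ℝ (Fin n)) (q.1 - z : EuclideanSpace ℝ (Fin n)))) < sigmaK k (hgcB u q.1) := by
    have ht : Tendsto (fun q : EuclideanSpace ℝ (Fin n) × ℝ =>
        (hgcB u q.1, ((q.1 - z : EuclideanSpace ℝ (Fin n)) : Fin n → ℝ), q.2)) (𝓝 x0 ×ˢ 𝓝 0)
        (𝓝 (hgcB u x0, ((x0 - z : EuclideanSpace ℝ (Fin n)) : Fin n → ℝ), (0:ℝ))) := by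
      refine Tendsto.prodMk_nhds ((hgc_B_cont hu).tendsto.comp tendsto_fst) (Tendsto.prodMk_nhds ?_ tendsto_snd)
      have : Continuous (fun y : EuclideanSpace ℝ (Fin n) => ((y - z : EuclideanSpace ℝ (Fin n)) : Fin n → ℝ)) := by fun_prop
      exact (this.tendsto x0).comp tendsto_fst
    exact ht.eventually hell
  obtain ⟨pa, hpa, pb, hpb, hell3⟩ := eventually_prod_iff.1 hell2
  have hev : ∀ᶠ y in 𝓝 x0, pa y ∧ ContDiffAt ℝ 2 u y ∧ ContDiffAt ℝ 2 w y ∧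
      sigmaK k (hgcB w y) = sigmaK k (hgcB u y) ∧ hgcMono k (hgcB w y) ∧ m ≤ w y ∧ w y ≤ U ∧
      ‖gradient u y‖ ≤ G ∧ ‖fderiv ℝ (fderiv ℝ u) y‖ ≤ K ∧ α * (ρ ^ 2 - ‖y - z‖ ^ 2) ≤ 1 := by
    have hwc := hw.continuousAt
    have e1 : ∀ᶠ y in 𝓝 x0, m < w y := hwc.eventually_const_lt (by rw [heq, hm]; linarith)
    have e2 : ∀ᶠ y in 𝓝 x0, w y < U := hwc.eventually_lt_const (by rw [heq, hU]; linarith)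
    have e3 : ∀ᶠ y in 𝓝 x0, ‖gradient u y‖ < G :=
      (hgc_gradient_cont hu).norm.eventually_lt_const (by rw [hGd]; linarith)
    have e4 : ∀ᶠ y in 𝓝 x0, ‖fderiv ℝ (fderiv ℝ u) y‖ < K := by
      have c : Tendsto (fun y => ‖fderiv ℝ (fderiv ℝ u) y‖) (𝓝 x0) (𝓝 ‖fderiv ℝ (fderiv ℝ u) x0‖) :=
        hgc_fderiv2_norm hu
      exact c.eventually_lt_const (by rw [hK]; linarith)
    have e5 : ∀ᶠ y in 𝓝 x0, α * (ρ ^ 2 - ‖y - z‖ ^ 2) < 1 := by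
      have : Continuous (fun y : EuclideanSpace ℝ (Fin n) => α * (ρ ^ 2 - ‖y - z‖ ^ 2)) := by fun_prop
      exact this.continuousAt.eventually_lt_const (by simp only [hx0zn]; simp)
    filter_upwards [hpa, hgc_C2_ev hu, hgc_C2_ev hw, hσ, hM, e1, e2, e3, e4, e5] with y a1 a2 a3 a4 a5 a6 a7 a8 a9 a10
    exact ⟨a1, a2, a3, a4, a5, a6.le, a7.le, a8.le, a9.le, a10.le⟩
  obtain ⟨δ, hδ, hball⟩ := (nhds_basis_closedBall.eventually_iff).1 hev
  -- continuity of the difference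
  have hcont : ContinuousOn (fun y => u y - w y) (closedBall x0 δ) := fun y hy =>
    ((hball hy).2.1.continuousAt.sub (hball hy).2.2.1.continuousAt).continuousWithinAt
  have hΔ : ∀ y, ‖y - z‖ ≤ ρ → 0 ≤ u y - w y := by
    intro y hy
    by_cases h : y = x0
    · rw [h, heq]; simp
    · have := hlt y (hgc_ball_sub (by rw [← hz, ← hρ]; exact hy) h)
      linarith
  obtain ⟨μ, hμ, hμ'⟩ : ∃ μ : ℝ, 0 < μ ∧ ∀ y ∈ closedBall z ρ ∩ sphere x0 δ, μ ≤ u y - w y := by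
    have hcp : IsCompact (closedBall z ρ ∩ sphere x0 δ) := (isCompact_closedBall z ρ).inter_right isClosed_sphere
    rcases (closedBall z ρ ∩ sphere x0 δ).eq_empty_or_nonempty with h | h
    · exact ⟨1, one_pos, by simp [h]⟩
    · obtain ⟨y, hy, hmin⟩ := hcp.exists_isMinOn h (hcont.mono (inter_subset_right.trans sphere_subset_closedBall))
      refine ⟨u y - w y, ?_, fun y' hy' => hmin hy'⟩
      have hyne : y ≠ x0 := by
        rintro rfl
        have := hy.2
        simp at this; linarith
      have := hlt y (hgc_ball_sub (by rw [← hz, ← hρ]; simpa [dist_eq_norm] using hy.1) hyne)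
      linarith
  obtain ⟨ε, hε, hε1, hε2⟩ : ∃ ε : ℝ, 0 < ε ∧ ε * (2 * ρ ^ 2) < μ ∧ pb (8 * α * m * ε) := by
    have t1 : Tendsto (fun ε : ℝ => ε * (2 * ρ ^ 2)) (𝓝 0) (𝓝 0) := by
      have : Continuous (fun ε : ℝ => ε * (2 * ρ ^ 2)) := by fun_prop
      simpa using this.tendsto 0
    have t2 : Tendsto (fun ε : ℝ => 8 * α * m * ε) (𝓝 0) (𝓝 0) := by
      have : Continuous (fun ε : ℝ => 8 * α * m * ε) := by fun_prop
      simpa using this.tendsto 0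
    have t3 := (t1.eventually (eventually_lt_nhds hμ)).and (t2.eventually hpb)
    obtain ⟨ε, h1, h2⟩ := ((eventually_mem_nhdsWithin (a := (0:ℝ)) (s := Ioi 0)).and (t3.filter_mono nhdsWithin_le_nhds)).exists
    exact ⟨ε, h1, h2.1, h2.2⟩
  obtain ⟨F, hF⟩ : ∃ F : EuclideanSpace ℝ (Fin n) → ℝ, F = fun y => u y - w y - ε * ((ρ ^ 2 - ‖y - z‖ ^ 2) + α * (ρ ^ 2 - ‖y - z‖ ^ 2) ^ 2) := ⟨_, rfl⟩
  have hcomp : IsCompact (closedBall z ρ ∩ closedBall x0 δ) := (isCompact_closedBall z ρ).inter_right isClosed_closedBall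
  have hx0mem : x0 ∈ closedBall z ρ ∩ closedBall x0 δ := by
    refine ⟨?_, mem_closedBall_self hδ.le⟩
    rw [mem_closedBall, dist_eq_norm, hx0zn]
  have hFx0 : F x0 = 0 := by rw [hF]; simp [heq, hx0zn]
  have hFcont : ContinuousOn F (closedBall z ρ ∩ closedBall x0 δ) := by
    rw [hF]
    exact (hcont.mono inter_subset_right).sub (continuousOn_const.mul (hgc_h_contDiff z ρ α).continuous.continuousOn)
  have hFnn : ∀ y ∈ closedBall z ρ ∩ closedBall x0 δ, 0 ≤ F y := by
    obtain ⟨x1, hx1, hmin⟩ := hcomp.exists_isMinOn ⟨x0, hx0mem⟩ hFcont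
    suffices h : 0 ≤ F x1 from fun y hy => h.trans (hmin hy)
    by_contra hneg
    push Not at hneg
    obtain ⟨b1, b2, b3, b4, b5, b6, b7, b8, b9, b10⟩ := hball hx1.2
    have hx1z : ‖x1 - z‖ ≤ ρ := by simpa [dist_eq_norm] using hx1.1
    obtain ⟨d, hd⟩ : ∃ d, d = ρ ^ 2 - ‖x1 - z‖ ^ 2 := ⟨_, rfl⟩
    have hd0 : 0 ≤ d := by rw [hd]; have := pow_le_pow_left₀ (norm_nonneg _) hx1z 2; linarith
    have hFx1 : F x1 = u x1 - w x1 - ε * (d + α * d ^ 2) := by rw [hF, hd]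
    rw [hFx1] at hneg
    have hΔ1 := hΔ x1 hx1z
    rw [← hd] at b10
    have hh2 : d + α * d ^ 2 ≤ 2 * ρ ^ 2 := by
      have : α * d ^ 2 ≤ d := by nlinarith
      have : d ≤ ρ ^ 2 := by rw [hd]; nlinarith [sq_nonneg ‖x1 - z‖]
      linarith
    have hlt1 : ‖x1 - z‖ < ρ := by
      refine lt_of_le_of_ne hx1z fun h => ?_
      have : d = 0 := by rw [hd, h]; ring
      rw [this] at hneg
      simp at hneg; linarith
    have hlt2 : dist x1 x0 < δ := by
      refine lt_of_le_of_ne hx1.2 fun h => ?_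
      have h1 := hμ' x1 ⟨hx1.1, h⟩
      have h2 := mul_le_mul_of_nonneg_left hh2 hε.le
      linarith
    have hloc : IsLocalMin F x1 := by
      refine hmin.isLocalMin (inter_mem ?_ ?_)
      · exact closedBall_mem_nhds_of_mem (by rw [mem_ball, dist_eq_norm]; exact hlt1)
      · exact closedBall_mem_nhds_of_mem hlt2
    rw [hF] at hloc
    have hpsd := hgc_contact b2 b3 hd rfl hloc hε.le hα0.le hρ0.le hd0 b10 hx1z hΔ1 (by linarith) hK0.le
      (fun a => ?_) b8 hm0 b6 b7 hαθ
    · have h1 := b5 _ hpsd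
      rw [add_sub_cancel] at h1
      have h2 := hell3 b1 hε2 (by positivity)
      rw [b4] at h1
      exact absurd (h1.trans_lt h2) (lt_irrefl _)
    · rw [hgc_D2_eq b2]
      have h1 := (fderiv ℝ (fderiv ℝ u) x1).le_opNorm₂ a a
      have h2 : ‖fderiv ℝ (fderiv ℝ u) x1‖ * ‖a‖ * ‖a‖ ≤ K * ‖a‖ * ‖a‖ := by gcongr
      have h3 := (abs_le.1 ((Real.norm_eq_abs _).symm.le.trans (h1.trans h2))).1
      linarith [h3, sq ‖a‖, mul_assoc K ‖a‖ ‖a‖]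
  -- conclude
  obtain ⟨t, ht0, ht1, ht2⟩ : ∃ t : ℝ, 0 < t ∧ t ≤ 1 ∧ t * ‖x0‖ ≤ δ := by
    refine ⟨min 1 (δ / ‖x0‖), by positivity, min_le_left _ _, ?_⟩
    calc min 1 (δ / ‖x0‖) * ‖x0‖ ≤ δ / ‖x0‖ * ‖x0‖ := by gcongr; exact min_le_right _ _
      _ = δ := by field_simp
  have hmem : x0 + (-t) • x0 ∈ closedBall z ρ ∩ closedBall x0 δ := by
    constructor
    · rw [mem_closedBall, dist_eq_norm, show x0 + (-t) • x0 - z = (1 / 2 - t) • x0 by rw [hz]; module,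
        norm_smul, hρ, Real.norm_eq_abs]
      have : |1 / 2 - t| ≤ 1 / 2 := abs_le.2 ⟨by linarith, by linarith⟩
      nlinarith
    · rw [mem_closedBall, dist_eq_norm, show x0 + (-t) • x0 - x0 = (-t) • x0 by module, norm_smul, norm_neg, Real.norm_eq_abs, abs_of_pos ht0]
      exact ht2
  have hconv : Convex ℝ (closedBall z ρ ∩ closedBall x0 δ) := (convex_closedBall _ _).inter (convex_closedBall _ _)
  have hseg := hconv.segment_subset hx0mem hmem
  have htan := mem_posTangentConeAt_of_segment_subset hseg
  have hmin0 : IsLocalMinOn F (closedBall z ρ ∩ closedBall x0 δ) x0 := by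
    refine IsMinOn.localize fun y hy => ?_
    change F x0 ≤ F y
    rw [hFx0]; exact hFnn y hy
  have hdu := hu.differentiableAt (n := 2) (by norm_num)
  have hdw := hw.differentiableAt (n := 2) (by norm_num)
  have hdh := ((hgc_h_contDiff z ρ α).contDiffAt (x := x0)).differentiableAt (by norm_num)
  have hFd : HasFDerivAt F (fderiv ℝ u x0 - fderiv ℝ w x0 - ε • fderiv ℝ (fun y : EuclideanSpace ℝ (Fin n) => (ρ ^ 2 - ‖y - z‖ ^ 2) + α * (ρ ^ 2 - ‖y - z‖ ^ 2) ^ 2) x0) x0 := by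
    rw [hF]
    exact (hdu.hasFDerivAt.sub hdw.hasFDerivAt).sub (hdh.hasFDerivAt.const_mul ε)
  have hfin := hmin0.hasFDerivWithinAt_nonneg hFd.hasFDerivWithinAt htan
  simp only [sub_apply, smul_apply, smul_eq_mul, map_smul] at hfin
  rw [hgc_h_hasFDeriv, hx0zn, hx0z, real_inner_smul_left, real_inner_self_eq_norm_sq] at hfin
  have hp : 0 < ε * ‖x0‖ ^ 2 := by positivity
  have hfin2 : t * (fderiv ℝ u x0 x0 - fderiv ℝ w x0 x0) ≤ t * (-(ε * ‖x0‖ ^ 2)) := by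
    nlinarith
  have := le_of_mul_le_mul_left hfin2 ht0
  linarith


/-- Inversion map. -/
noncomputable def hgcPsi {n : ℕ} (r : ℝ) (x : EuclideanSpace ℝ (Fin n)) : EuclideanSpace ℝ (Fin n) :=
  (r ^ 2 * (‖x‖ ^ 2)⁻¹) • x

/-- Kelvin transform (in the `u` variable). -/
noncomputable def hgcInv {n : ℕ} (r : ℝ) (u : EuclideanSpace ℝ (Fin n) → ℝ)
    (x : EuclideanSpace ℝ (Fin n)) : ℝ :=
  (‖x‖ ^ 2 / r ^ 2) * u (hgcPsi r x)

/-- Reflection. -/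
noncomputable def hgcO {n : ℕ} (x a : EuclideanSpace ℝ (Fin n)) : EuclideanSpace ℝ (Fin n) :=
  a - (2 * inner ℝ x a * (‖x‖ ^ 2)⁻¹) • x

lemma hgc_O_inner {n : ℕ} {x : EuclideanSpace ℝ (Fin n)} (hx : x ≠ 0) (a b : EuclideanSpace ℝ (Fin n)) :
    inner ℝ (hgcO x a) (hgcO x b) = inner ℝ a b := by
  have h : ‖x‖ ≠ 0 := norm_ne_zero_iff.2 hx
  simp only [hgcO, inner_sub_left, inner_sub_right, real_inner_smul_left, real_inner_smul_right,
    real_inner_self_eq_norm_sq]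
  rw [real_inner_comm x a]
  field_simp
  ring

lemma hgc_O_symm {n : ℕ} (x a b : EuclideanSpace ℝ (Fin n)) :
    inner ℝ (hgcO x a) b = inner ℝ a (hgcO x b) := by
  simp only [hgcO, inner_sub_left, inner_sub_right, real_inner_smul_left, real_inner_smul_right]
  rw [real_inner_comm x a]
  ring

lemma hgc_O_self {n : ℕ} {x : EuclideanSpace ℝ (Fin n)} (hx : x ≠ 0) (a : EuclideanSpace ℝ (Fin n)) :
    inner ℝ x (hgcO x a) = - inner ℝ x a := by
  have h : ‖x‖ ≠ 0 := norm_ne_zero_iff.2 hx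
  simp only [hgcO, inner_sub_right, real_inner_smul_right, real_inner_self_eq_norm_sq]
  field_simp
  ring

lemma hgc_nsinv_deriv {n : ℕ} {x : EuclideanSpace ℝ (Fin n)} (hx : x ≠ 0) :
    ∃ L : EuclideanSpace ℝ (Fin n) →L[ℝ] ℝ,
      HasFDerivAt (fun y : EuclideanSpace ℝ (Fin n) => (‖y‖ ^ 2)⁻¹) L x ∧
      ∀ a, L a = - (2 * inner ℝ x a) * ((‖x‖ ^ 2)⁻¹) ^ 2 := by
  have h : ‖x‖ ^ 2 ≠ 0 := by have : ‖x‖ ≠ 0 := norm_ne_zero_iff.2 hx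
                             positivity
  have h1 := (hasFDerivAt_id x).norm_sq
  have h2 := (hasDerivAt_inv h).comp_hasFDerivAt x h1
  refine ⟨_, h2, fun a => ?_⟩
  simp
  ring

lemma hgc_psi_deriv {n : ℕ} {x : EuclideanSpace ℝ (Fin n)} (hx : x ≠ 0) (r : ℝ) :
    ∃ L : EuclideanSpace ℝ (Fin n) →L[ℝ] EuclideanSpace ℝ (Fin n),
      HasFDerivAt (hgcPsi r) L x ∧ ∀ a, L a = (r ^ 2 * (‖x‖ ^ 2)⁻¹) • hgcO x a := by
  obtain ⟨L, hL, hLa⟩ := hgc_nsinv_deriv hx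
  have h2 := (hL.const_mul (r ^ 2)).smul (hasFDerivAt_id x)
  refine ⟨_, h2, fun a => ?_⟩
  simp [hLa, hgcO, smul_sub, smul_smul]
  module

lemma hgc_psi_contDiffAt {n : ℕ} {x : EuclideanSpace ℝ (Fin n)} (hx : x ≠ 0) (r : ℝ) {m : WithTop ℕ∞} :
    ContDiffAt ℝ m (hgcPsi r) x := by
  have h : ‖x‖ ^ 2 ≠ 0 := by have : ‖x‖ ≠ 0 := norm_ne_zero_iff.2 hx
                             positivity
  exact (contDiffAt_const.mul ((contDiffAt_id.norm_sq ℝ).inv h)).smul contDiffAt_id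

lemma hgc_inv_contDiffAt {n : ℕ} {u : EuclideanSpace ℝ (Fin n) → ℝ} {x : EuclideanSpace ℝ (Fin n)} (hx : x ≠ 0) (r : ℝ)
    (hu : ContDiffAt ℝ 2 u (hgcPsi r x)) : ContDiffAt ℝ 2 (hgcInv r u) x :=
  ((contDiffAt_id.norm_sq ℝ).div_const _).mul (hu.comp x (hgc_psi_contDiffAt hx r))

lemma hgc_inv_fderiv {n : ℕ} {u : EuclideanSpace ℝ (Fin n) → ℝ} {x : EuclideanSpace ℝ (Fin n)} (hx : x ≠ 0) {r : ℝ}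
    (hr : r ≠ 0) (hu : DifferentiableAt ℝ u (hgcPsi r x)) (a : EuclideanSpace ℝ (Fin n)) :
    fderiv ℝ (hgcInv r u) x a = (2 / r ^ 2) * u (hgcPsi r x) * inner ℝ x a
      + fderiv ℝ u (hgcPsi r x) (hgcO x a) := by
  have h : ‖x‖ ≠ 0 := norm_ne_zero_iff.2 hx
  obtain ⟨L, hL, hLa⟩ := hgc_psi_deriv hx r
  have h0 : HasFDerivAt (fun y : EuclideanSpace ℝ (Fin n) => ‖y‖ ^ 2) _ x := (hasFDerivAt_id x).norm_sq
  have h1 := h0.mul_const ((r ^ 2)⁻¹)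
  have h2 := h1.mul (hu.hasFDerivAt.comp x hL)
  have h3 : hgcInv r u = (fun y : EuclideanSpace ℝ (Fin n) => ‖y‖ ^ 2 * (r ^ 2)⁻¹) * (u ∘ hgcPsi r) := by
    funext y
    simp [hgcInv, div_eq_mul_inv]
  rw [h3, h2.fderiv]
  simp [hLa]
  field_simp
  ring

lemma hgc_inv_D2 {n : ℕ} {u : EuclideanSpace ℝ (Fin n) → ℝ} {x : EuclideanSpace ℝ (Fin n)} (hx : x ≠ 0) {r : ℝ}
    (hr : r ≠ 0) (hu : ContDiffAt ℝ 2 u (hgcPsi r x)) (a b : EuclideanSpace ℝ (Fin n)) :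
    hgcD2 (hgcInv r u) x a b = (r ^ 2 * (‖x‖ ^ 2)⁻¹) * hgcD2 u (hgcPsi r x) (hgcO x a) (hgcO x b)
      + inner ℝ a b * (2 / r ^ 2 * u (hgcPsi r x) - 2 * (‖x‖ ^ 2)⁻¹ * fderiv ℝ u (hgcPsi r x) x) := by
  have h : ‖x‖ ≠ 0 := norm_ne_zero_iff.2 hx
  rw [hgc_D2_eq hu]
  unfold hgcD2
  have hc : ContinuousAt (hgcPsi r) x := (hgc_psi_contDiffAt (m := 0) hx r).continuousAt
  have hev : (fun y => fderiv ℝ (hgcInv r u) y b) =ᶠ[nhds x] fun y =>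
      (2 / r ^ 2) * u (hgcPsi r y) * inner ℝ y b + fderiv ℝ u (hgcPsi r y) (hgcO y b) := by
    filter_upwards [hc.eventually (hgc_C2_ev hu), isOpen_ne.mem_nhds hx] with y h1 h2
    exact hgc_inv_fderiv h2 hr (h1.differentiableAt (by norm_num)) b
  obtain ⟨L, hL, hLa⟩ := hgc_psi_deriv hx r
  obtain ⟨L2, hL2, hLa2⟩ := hgc_nsinv_deriv hx
  have d1 := (hu.differentiableAt (by norm_num)).hasFDerivAt.comp x hL
  have d2 : HasFDerivAt (fun y : EuclideanSpace ℝ (Fin n) => inner ℝ y b) _ x :=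
    (hasFDerivAt_id x).inner ℝ (hasFDerivAt_const b x)
  have d3 := (d1.const_mul (2 / r ^ 2)).mul d2
  have d4 := (hgc_diff_fderiv hu).hasFDerivAt.comp x hL
  have d5 : HasFDerivAt (fun y => hgcO y b) _ x :=
    (((d2.const_mul 2).mul hL2).smul (hasFDerivAt_id x)).const_sub b
  have d6 := d3.add (d4.clm_apply d5)
  have d7 : HasFDerivAt (fun y =>
      (2 / r ^ 2) * u (hgcPsi r y) * inner ℝ y b + fderiv ℝ u (hgcPsi r y) (hgcO y b)) _ x := d6
  rw [hev.fderiv_eq, d7.fderiv]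
  simp [hLa, hLa2, real_inner_comm]
  simp only [hgcO, map_sub, map_smul, smul_eq_mul, sub_apply, smul_apply, real_inner_comm]
  field_simp
  ring

lemma hgc_inv_grad {n : ℕ} {u : EuclideanSpace ℝ (Fin n) → ℝ} {x : EuclideanSpace ℝ (Fin n)} (hx : x ≠ 0) {r : ℝ}
    (hr : r ≠ 0) (hu : DifferentiableAt ℝ u (hgcPsi r x)) :
    ‖gradient (hgcInv r u) x‖ ^ 2 = 4 * u (hgcPsi r x) ^ 2 * ‖x‖ ^ 2 / r ^ 4
      - 4 * u (hgcPsi r x) / r ^ 2 * fderiv ℝ u (hgcPsi r x) x + ‖gradient u (hgcPsi r x)‖ ^ 2 := by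
  have h1 : gradient (hgcInv r u) x = ((2 / r ^ 2) * u (hgcPsi r x)) • x + hgcO x (gradient u (hgcPsi r x)) := by
    refine ext_inner_right ℝ fun a => ?_
    rw [← hgc_fderiv_grad, hgc_inv_fderiv hx hr hu, inner_add_left, real_inner_smul_left, hgc_O_symm,
      ← hgc_fderiv_grad]
  rw [h1, norm_add_sq_real, ← real_inner_self_eq_norm_sq (hgcO _ _), hgc_O_inner hx, real_inner_smul_left,
    hgc_O_self hx, norm_smul, mul_pow, Real.norm_eq_abs, sq_abs, real_inner_self_eq_norm_sq,
    real_inner_comm _ x, ← hgc_fderiv_grad]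
  field_simp
  ring

lemma hgc_inv_bilin {n : ℕ} {u : EuclideanSpace ℝ (Fin n) → ℝ} {x : EuclideanSpace ℝ (Fin n)} (hx : x ≠ 0) {r : ℝ}
    (hr : r ≠ 0) (hu : ContDiffAt ℝ 2 u (hgcPsi r x)) (a b : EuclideanSpace ℝ (Fin n)) :
    hgcInv r u x * hgcD2 (hgcInv r u) x a b - 1 / 2 * ‖gradient (hgcInv r u) x‖ ^ 2 * inner ℝ a b
    = u (hgcPsi r x) * hgcD2 u (hgcPsi r x) (hgcO x a) (hgcO x b)
      - 1 / 2 * ‖gradient u (hgcPsi r x)‖ ^ 2 * inner ℝ (hgcO x a) (hgcO x b) := by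
  have h : ‖x‖ ≠ 0 := norm_ne_zero_iff.2 hx
  rw [hgc_inv_D2 hx hr hu, hgc_inv_grad hx hr (hu.differentiableAt (by norm_num)), hgc_O_inner hx, hgcInv]
  field_simp
  ring

lemma hgc_B_entry {n : ℕ} (u : EuclideanSpace ℝ (Fin n) → ℝ) (x : EuclideanSpace ℝ (Fin n)) (i j : Fin n) :
    hgcB u x i j = u x * hgcD2 u x (EuclideanSpace.single i 1) (EuclideanSpace.single j 1)
      - 1 / 2 * ‖gradient u x‖ ^ 2 * inner ℝ (EuclideanSpace.single i (1:ℝ)) (EuclideanSpace.single j (1:ℝ)) := by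
  rw [hgcB, hgc_sum_pd, EuclideanSpace.inner_single_left]
  simp only [map_one, one_mul]
  congr 2
  simp [Pi.single_apply]

lemma hgc_inv_B {n : ℕ} {u : EuclideanSpace ℝ (Fin n) → ℝ} {x : EuclideanSpace ℝ (Fin n)} (hx : x ≠ 0) {r : ℝ}
    (hr : r ≠ 0) (hu : ContDiffAt ℝ 2 u (hgcPsi r x)) :
    ∃ Q : Matrix (Fin n) (Fin n) ℝ, Q.conjTranspose = Q ∧ Q * Q = 1 ∧
      hgcB (hgcInv r u) x = Q * hgcB u (hgcPsi r x) * Q := by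
  have hQ : ∀ i j, hgcO x (EuclideanSpace.single i 1) j = inner ℝ (hgcO x (EuclideanSpace.single i 1)) (EuclideanSpace.single j (1:ℝ)) := by
    intro i j
    rw [EuclideanSpace.inner_single_right]; simp
  have hsymm : ∀ i j, hgcO x (EuclideanSpace.single i 1) j = hgcO x (EuclideanSpace.single j 1) i := by
    intro i j
    rw [hQ, hQ, hgc_O_symm, real_inner_comm]
  obtain ⟨Q, hQd⟩ : ∃ Q : Matrix (Fin n) (Fin n) ℝ, ∀ i j, Q i j = hgcO x (EuclideanSpace.single i 1) j :=
    ⟨Matrix.of fun i j => hgcO x (EuclideanSpace.single i 1) j, fun i j => rfl⟩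
  refine ⟨Q, ?_, ?_, ?_⟩
  · ext i j
    rw [Matrix.conjTranspose_apply, star_trivial, hQd, hQd]
    exact hsymm j i
  · ext i j
    rw [Matrix.mul_apply]
    have : ∑ l, Q i l * Q l j
        = inner ℝ (hgcO x (EuclideanSpace.single i 1)) (hgcO x (EuclideanSpace.single j 1)) := by
      rw [PiLp.inner_apply]
      refine Finset.sum_congr rfl fun l _ => ?_
      rw [hQd, hQd, hsymm l j]; simp [mul_comm]
    rw [this, hgc_O_inner hx, EuclideanSpace.inner_single_left]
    simp [Matrix.one_apply, Pi.single_apply]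
  · ext i j
    rw [hgc_B_entry, hgc_inv_bilin hx hr hu, ← hgc_B_bilin hu, Matrix.mul_apply]
    rw [Finset.sum_comm]
    refine Finset.sum_congr rfl fun l _ => ?_
    rw [Matrix.mul_apply, Finset.sum_mul]
    refine Finset.sum_congr rfl fun m _ => ?_
    rw [hQd, hQd, hsymm j l]

lemma hgc_conj_sigma {n : ℕ} {Q : Matrix (Fin n) (Fin n) ℝ} (hQ : Q * Q = 1) (M : Matrix (Fin n) (Fin n) ℝ) (j : ℕ) :
    sigmaK j (Q * M * Q) = sigmaK j M := by
  rw [sigmaK, sigmaK, Matrix.charpoly_mul_comm, ← Matrix.mul_assoc, hQ, Matrix.one_mul]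

lemma hgc_conj_mono {n : ℕ} {Q : Matrix (Fin n) (Fin n) ℝ} (hQ' : Q.conjTranspose = Q) (hQ : Q * Q = 1)
    {M : Matrix (Fin n) (Fin n) ℝ} {k : ℕ} (hM : hgcMono k M) : hgcMono k (Q * M * Q) := by
  intro N hN
  have h1 : (Q * N * Q).PosSemidef := by
    have := hN.conjTranspose_mul_mul_same Q
    rwa [hQ'] at this
  have h2 : Q * M * Q + N = Q * (M + Q * N * Q) * Q := by
    have : Q * (Q * N * Q) * Q = (Q * Q) * N * (Q * Q) := by simp only [Matrix.mul_assoc]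
    rw [Matrix.mul_add, Matrix.add_mul, this, hQ]; simp
  rw [h2, hgc_conj_sigma hQ, hgc_conj_sigma hQ]
  exact hM _ h1

lemma hgc_inv_sigma {n : ℕ} {u : EuclideanSpace ℝ (Fin n) → ℝ} {x : EuclideanSpace ℝ (Fin n)} (hx : x ≠ 0) {r : ℝ}
    (hr : r ≠ 0) (hu : ContDiffAt ℝ 2 u (hgcPsi r x)) (j : ℕ) :
    sigmaK j (hgcB (hgcInv r u) x) = sigmaK j (hgcB u (hgcPsi r x)) := by
  obtain ⟨Q, h1, h2, h3⟩ := hgc_inv_B hx hr hu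
  rw [h3, hgc_conj_sigma h2]

lemma hgc_inv_mono {n : ℕ} {u : EuclideanSpace ℝ (Fin n) → ℝ} {x : EuclideanSpace ℝ (Fin n)} (hx : x ≠ 0) {r : ℝ}
    (hr : r ≠ 0) (hu : ContDiffAt ℝ 2 u (hgcPsi r x)) {k : ℕ} (hM : hgcMono k (hgcB u (hgcPsi r x))) :
    hgcMono k (hgcB (hgcInv r u) x) := by
  obtain ⟨Q, h1, h2, h3⟩ := hgc_inv_B hx hr hu
  rw [h3]; exact hgc_conj_mono h1 h2 hM

lemma hgc_inv_gamma {n : ℕ} {u : EuclideanSpace ℝ (Fin n) → ℝ} {x : EuclideanSpace ℝ (Fin n)} (hx : x ≠ 0) {r : ℝ}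
    (hr : r ≠ 0) (hu : ContDiffAt ℝ 2 u (hgcPsi r x)) {k : ℕ} (hM : gammaKPlus k (hgcB u (hgcPsi r x))) :
    gammaKPlus k (hgcB (hgcInv r u) x) := by
  intro j h1 h2
  rw [hgc_inv_sigma hx hr hu]; exact hM j h1 h2


lemma hgc_psi_norm {n : ℕ} {x : EuclideanSpace ℝ (Fin n)} (hx : x ≠ 0) (r : ℝ) :
    ‖hgcPsi r x‖ = r ^ 2 / ‖x‖ := by
  have h : ‖x‖ ≠ 0 := norm_ne_zero_iff.2 hx
  rw [hgcPsi, norm_smul, Real.norm_eq_abs, abs_of_nonneg (by positivity)]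
  field_simp

lemma hgc_psi_self {n : ℕ} {x : EuclideanSpace ℝ (Fin n)} (hx : x ≠ 0) :
    hgcPsi ‖x‖ x = x := by
  have h : ‖x‖ ≠ 0 := norm_ne_zero_iff.2 hx
  rw [hgcPsi, mul_inv_cancel₀ (by positivity), one_smul]

lemma hgc_inv_self {n : ℕ} {u : EuclideanSpace ℝ (Fin n) → ℝ} {x : EuclideanSpace ℝ (Fin n)} (hx : x ≠ 0) :
    hgcInv ‖x‖ u x = u x := by
  have h : ‖x‖ ≠ 0 := norm_ne_zero_iff.2 hx
  rw [hgcInv, hgc_psi_self hx, div_self (by positivity), one_mul]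

lemma hgc_O_xx {n : ℕ} {x : EuclideanSpace ℝ (Fin n)} (hx : x ≠ 0) : hgcO x x = -x := by
  have h : ‖x‖ ≠ 0 := norm_ne_zero_iff.2 hx
  rw [hgcO, real_inner_self_eq_norm_sq, mul_assoc, mul_inv_cancel₀ (by positivity)]
  module

lemma hgc_inv_zero {n : ℕ} {u : EuclideanSpace ℝ (Fin n) → ℝ} (r : ℝ) : hgcInv r u 0 = 0 := by
  simp [hgcInv]

lemma hgc_inv_fderiv_self {n : ℕ} {u : EuclideanSpace ℝ (Fin n) → ℝ} {x : EuclideanSpace ℝ (Fin n)} (hx : x ≠ 0)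
    (hu : DifferentiableAt ℝ u x) : fderiv ℝ (hgcInv ‖x‖ u) x x = 2 * u x - fderiv ℝ u x x := by
  have h : ‖x‖ ≠ 0 := norm_ne_zero_iff.2 hx
  rw [hgc_inv_fderiv hx h (by rwa [hgc_psi_self hx]), hgc_psi_self hx, hgc_O_xx hx,
    real_inner_self_eq_norm_sq, map_neg]
  field_simp
  ring

-- continuity of the Kelvin transform
lemma hgc_kappa_cont {n : ℕ} {u : EuclideanSpace ℝ (Fin n) → ℝ} (hc : Continuous u) (hnn : ∀ y, 0 ≤ u y)
    (hinf : ∀ ε > 0, ∃ T : ℝ, ∀ y, T ≤ ‖y‖ → u y ≤ ε * ‖y‖ ^ 2) :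
    Continuous (hgcInv 1 u) := by
  rw [continuous_iff_continuousAt]
  intro z
  by_cases hz : z = 0
  · subst hz
    rw [ContinuousAt, hgc_inv_zero, Metric.tendsto_nhds_nhds]
    intro ε hε
    obtain ⟨T, hT⟩ := hinf (ε / 2) (by positivity)
    refine ⟨1 / (|T| + 1), by positivity, fun {y} hy => ?_⟩
    rw [Real.dist_eq, sub_zero]
    by_cases hy0 : y = 0
    · rw [hy0, hgc_inv_zero]; simpa using hε
    · have h : 0 < ‖y‖ := norm_pos_iff.2 hy0
      have h1 : T ≤ ‖hgcPsi 1 y‖ := by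
        rw [hgc_psi_norm hy0]
        rw [dist_zero_right, lt_div_iff₀ (by positivity)] at hy
        rw [le_div_iff₀ h]
        have := le_abs_self T
        nlinarith
      have h2 := hT _ h1
      rw [hgc_psi_norm hy0] at h2
      rw [abs_of_nonneg (by have := hnn (hgcPsi 1 y); unfold hgcInv; positivity), hgcInv]
      calc ‖y‖ ^ 2 / 1 ^ 2 * u (hgcPsi 1 y) ≤ ‖y‖ ^ 2 / 1 ^ 2 * (ε / 2 * (1 ^ 2 / ‖y‖) ^ 2) := by gcongr
        _ = ε / 2 := by field_simp
        _ < ε := by linarith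
  · have h1 : ContinuousAt (hgcPsi 1) z := (hgc_psi_contDiffAt (m := 0) hz 1).continuousAt
    exact ((continuousAt_id.norm.pow 2).div_const _).mul (hc.continuousAt.comp h1)

lemma hgc_inv_kappa {n : ℕ} {u : EuclideanSpace ℝ (Fin n) → ℝ} {r : ℝ} (hr : r ≠ 0) (y : EuclideanSpace ℝ (Fin n)) :
    hgcInv r u y = r ^ 2 * hgcInv 1 u ((r ^ 2)⁻¹ • y) := by
  by_cases hy : y = 0
  · simp [hy, hgc_inv_zero]
  have h : ‖y‖ ≠ 0 := norm_ne_zero_iff.2 hy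
  have h1 : hgcPsi 1 ((r ^ 2)⁻¹ • y) = hgcPsi r y := by
    rw [hgcPsi, hgcPsi, smul_smul, norm_smul, Real.norm_eq_abs, abs_of_nonneg (by positivity)]
    congr 1
    field_simp
  rw [hgcInv, hgcInv, h1, norm_smul, Real.norm_eq_abs, abs_of_nonneg (by positivity)]
  field_simp

open Topology in
lemma hgc_inv_joint {n : ℕ} {u : EuclideanSpace ℝ (Fin n) → ℝ} (hκ : Continuous (hgcInv 1 u)) {r : ℝ} (hr : 0 < r)
    (y : EuclideanSpace ℝ (Fin n)) :
    ContinuousAt (fun q : ℝ × EuclideanSpace ℝ (Fin n) => hgcInv q.1 u q.2) (r, y) := by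
  have h1 : ContinuousAt (fun q : ℝ × EuclideanSpace ℝ (Fin n) => q.1 ^ 2 * hgcInv 1 u ((q.1 ^ 2)⁻¹ • q.2)) (r, y) := by
    have h2 : ContinuousAt (fun q : ℝ × EuclideanSpace ℝ (Fin n) => (q.1 ^ 2)⁻¹ • q.2) (r, y) :=
      ((continuousAt_fst.pow 2).inv₀ (pow_ne_zero 2 hr.ne')).smul continuousAt_snd
    exact (continuousAt_fst.pow 2).mul (hκ.continuousAt.comp h2)
  refine h1.congr ?_
  have : ∀ᶠ q : ℝ × EuclideanSpace ℝ (Fin n) in 𝓝 (r, y), 0 < q.1 :=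
    continuousAt_fst.eventually_const_lt hr
  filter_upwards [this] with q hq
  exact (hgc_inv_kappa hq.ne' q.2).symm

lemma hgc_inv_cont {n : ℕ} {u : EuclideanSpace ℝ (Fin n) → ℝ} (hκ : Continuous (hgcInv 1 u)) {r : ℝ} (hr : 0 < r) :
    Continuous (hgcInv r u) := by
  rw [continuous_iff_continuousAt]
  intro y
  exact (hgc_inv_joint hκ hr y).comp (f := fun y => (r, y)) (by fun_prop)

-- radial monotonicity
lemma hgc_radial {n : ℕ} {u : EuclideanSpace ℝ (Fin n) → ℝ} {y : EuclideanSpace ℝ (Fin n)} {t : ℝ} (ht : 1 ≤ t)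
    (h : ∀ s ∈ Icc 1 t, DifferentiableAt ℝ u (s • y) ∧ fderiv ℝ u (s • y) (s • y) ≤ u (s • y)) :
    u (t • y) ≤ t * u y := by
  have hd : ∀ s ∈ Icc 1 t, HasDerivAt (fun s : ℝ => u (s • y) / s)
      ((fderiv ℝ u (s • y) y * s - u (s • y) * 1) / s ^ 2) s := by
    intro s hs
    have hs0 : s ≠ 0 := by have := hs.1; linarith
    have h1 : HasDerivAt (fun s : ℝ => s • y) y s := by
      simpa using (hasDerivAt_id s).smul_const y
    exact ((h s hs).1.hasFDerivAt.comp_hasDerivAt s h1).div (hasDerivAt_id s) hs0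
  have hanti : AntitoneOn (fun s : ℝ => u (s • y) / s) (Icc 1 t) := by
    refine antitoneOn_of_deriv_nonpos (convex_Icc 1 t) (fun s hs => (hd s hs).continuousAt.continuousWithinAt)
      (fun s hs => (hd s (interior_subset hs)).differentiableAt.differentiableWithinAt) (fun s hs => ?_)
    have hs' := interior_subset hs
    rw [(hd s hs').deriv]
    have h2 := (h s hs').2
    rw [map_smul, smul_eq_mul] at h2
    exact div_nonpos_of_nonpos_of_nonneg (by linarith) (by positivity)
  have h3 := hanti (left_mem_Icc.2 ht) (right_mem_Icc.2 ht) ht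
  simp only [one_smul, div_one] at h3
  rw [div_le_iff₀ (by linarith)] at h3
  linarith

-- application of Hopf to the Kelvin transform
open Topology in
lemma hgc_hopf_inv {n k : ℕ} (hk : 1 ≤ k) (hkn : k ≤ n) {u : EuclideanSpace ℝ (Fin n) → ℝ} {c : ℝ}
    (hc : Continuous u)
    (hC2 : ∀ y, 0 < u y → ContDiffAt ℝ 2 u y) (hσ : ∀ y, 0 < u y → sigmaK k (hgcB u y) = c)
    (hM : ∀ y, 0 < u y → hgcMono k (hgcB u y)) {r : ℝ} (hr : 0 < r)
    {x0 : EuclideanSpace ℝ (Fin n)} (hx0 : x0 ≠ 0) (hlt : ∀ y, ‖y‖ < ‖x0‖ → hgcInv r u y < u y)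
    (heq : hgcInv r u x0 = u x0) (hpos : 0 < u x0) (hG : gammaKPlus k (hgcB u x0)) :
    ContDiffAt ℝ 2 (hgcInv r u) x0 ∧ fderiv ℝ u x0 x0 - fderiv ℝ (hgcInv r u) x0 x0 < 0 := by
  have hposψ : 0 < u (hgcPsi r x0) := by
    have h1 : 0 < hgcInv r u x0 := by rw [heq]; exact hpos
    rw [hgcInv] at h1
    exact pos_of_mul_pos_right h1 (by positivity)
  have hw : ContDiffAt ℝ 2 (hgcInv r u) x0 := hgc_inv_contDiffAt hx0 r (hC2 _ hposψ)
  have hψ : ContinuousAt (hgcPsi r) x0 := (hgc_psi_contDiffAt (m := 0) hx0 r).continuousAt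
  have ev1 : ∀ᶠ y in 𝓝 x0, 0 < u (hgcPsi r y) :=
    (hc.continuousAt.comp hψ).eventually_const_lt hposψ
  have ev2 : ∀ᶠ y in 𝓝 x0, 0 < u y := hc.continuousAt.eventually_const_lt hpos
  have ev3 : ∀ᶠ y in 𝓝 x0, y ≠ 0 := isOpen_ne.mem_nhds hx0
  refine ⟨hw, hgc_hopf hk hkn hx0 hlt heq hpos (hC2 _ hpos) hw hG ?_ ?_⟩
  · filter_upwards [ev1, ev2, ev3] with y h1 h2 h3
    rw [hgc_inv_sigma h3 hr.ne' (hC2 _ h1), hσ _ h1, hσ _ h2]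
  · filter_upwards [ev1, ev3] with y h1 h3
    exact hgc_inv_mono h3 hr.ne' (hC2 _ h1) (hM _ h1)


open Topology in
lemma hgc_strict {n k : ℕ} (hk : 1 ≤ k) (hkn : k ≤ n) {u : EuclideanSpace ℝ (Fin n) → ℝ} {c : ℝ}
    (hc : Continuous u) (hκ : Continuous (hgcInv 1 u))
    (hC2 : ∀ y, 0 < u y → ContDiffAt ℝ 2 u y) (hσ : ∀ y, 0 < u y → sigmaK k (hgcB u y) = c)
    (hM : ∀ y, 0 < u y → hgcMono k (hgcB u y)) {R : ℝ}
    (hpos : ∀ y, ‖y‖ ≤ R → 0 < u y) (hG : ∀ y, ‖y‖ < R → gammaKPlus k (hgcB u y))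
    {r : ℝ} (hr : 0 < r) (hrR : r ≤ R) (hC : ∀ y, ‖y‖ < r → hgcInv r u y ≤ u y) :
    ∀ y, ‖y‖ < r → hgcInv r u y < u y := by
  by_contra hcon
  push Not at hcon
  obtain ⟨y1, hy1, hy1'⟩ := hcon
  have hcp : IsCompact (closedBall 0 ‖y1‖ ∩ {y | u y ≤ hgcInv r u y}) :=
    (isCompact_closedBall _ _).inter_right (isClosed_le hc (hgc_inv_cont hκ hr))
  obtain ⟨z, hz, hmin⟩ := hcp.exists_isMinOn ⟨y1, by simp, hy1'⟩ continuous_norm.continuousOn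
  have hz1 : ‖z‖ ≤ ‖y1‖ := by simpa using hz.1
  have hzr : ‖z‖ < r := hz1.trans_lt hy1
  have hz2 : u z ≤ hgcInv r u z := hz.2
  have hzpos : 0 < u z := hpos z (hzr.le.trans hrR)
  have hz0 : z ≠ 0 := by
    rintro rfl
    rw [hgc_inv_zero] at hz2; linarith
  have heq : hgcInv r u z = u z := le_antisymm (hC z hzr) hz2
  have hlt : ∀ y, ‖y‖ < ‖z‖ → hgcInv r u y < u y := by
    intro y hy
    by_contra h
    push Not at h
    have : ‖z‖ ≤ ‖y‖ := hmin (a := y) ⟨by simpa using (hy.le.trans hz1), h⟩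
    linarith
  obtain ⟨hw, hd⟩ := hgc_hopf_inv hk hkn hc hC2 hσ hM hr hz0 hlt heq hzpos (hG z (hzr.trans_le hrR))
  have hloc : IsLocalMin (fun y => u y - hgcInv r u y) z := by
    have : ∀ᶠ y in 𝓝 z, ‖y‖ < r := continuous_norm.continuousAt.eventually_lt_const hzr
    filter_upwards [this] with y hy
    rw [heq]
    have := hC y hy
    linarith
  have h0 := hloc.fderiv_eq_zero
  rw [fderiv_fun_sub ((hC2 z hzpos).differentiableAt (by norm_num)) (hw.differentiableAt (by norm_num))] at h0
  have h1 := congrArg (fun f => f z) h0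
  simp only [sub_apply, zero_apply] at h1
  linarith

lemma hgc_sphere {n k : ℕ} (hk : 1 ≤ k) (hkn : k ≤ n) {u : EuclideanSpace ℝ (Fin n) → ℝ} {c : ℝ}
    (hc : Continuous u)
    (hC2 : ∀ y, 0 < u y → ContDiffAt ℝ 2 u y) (hσ : ∀ y, 0 < u y → sigmaK k (hgcB u y) = c)
    (hM : ∀ y, 0 < u y → hgcMono k (hgcB u y))
    {r : ℝ} (hr : 0 < r) (hC : ∀ y, ‖y‖ < r → hgcInv r u y < u y)
    {x0 : EuclideanSpace ℝ (Fin n)} (hx0 : ‖x0‖ = r) (hpos : 0 < u x0) (hG : gammaKPlus k (hgcB u x0)) :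
    fderiv ℝ u x0 x0 < u x0 := by
  subst hx0
  have hx : x0 ≠ 0 := norm_pos_iff.1 hr
  obtain ⟨hw, hd⟩ := hgc_hopf_inv hk hkn hc hC2 hσ hM hr hx hC (hgc_inv_self hx) hpos hG
  rw [hgc_inv_fderiv_self hx ((hC2 _ hpos).differentiableAt (by norm_num))] at hd
  linarith

-- the radial comparison inside a convex region
lemma hgc_radial_inv {n : ℕ} {u : EuclideanSpace ℝ (Fin n) → ℝ} {y : EuclideanSpace ℝ (Fin n)} {r : ℝ}
    (hy : y ≠ 0) (hyr : ‖y‖ ≤ r) {S : Set (EuclideanSpace ℝ (Fin n))} (hS : Convex ℝ S)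
    (h : ∀ z ∈ S, DifferentiableAt ℝ u z ∧ fderiv ℝ u z z ≤ u z) (h1 : y ∈ S) (h2 : hgcPsi r y ∈ S) :
    hgcInv r u y ≤ u y := by
  have hn : 0 < ‖y‖ := norm_pos_iff.2 hy
  obtain ⟨t, ht⟩ : ∃ t, t = r ^ 2 * (‖y‖ ^ 2)⁻¹ := ⟨_, rfl⟩
  have ht1 : 1 ≤ t := by
    rw [ht, ← div_eq_mul_inv, one_le_div (by positivity)]
    gcongr
  have hψ : hgcPsi r y = t • y := by rw [hgcPsi, ht]
  have hr0 : 0 < r := hn.trans_le hyr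
  have key := hgc_radial (u := u) (y := y) ht1 (fun s hs => h _ ?_)
  · rw [hgcInv, hψ]
    have e : ‖y‖ ^ 2 / r ^ 2 = t⁻¹ := by rw [ht]; field_simp
    rw [e, inv_mul_le_iff₀ (by linarith)]
    exact key
  · rw [hψ] at h2
    rcases eq_or_lt_of_le ht1 with h3 | h3
    · have : s = 1 := le_antisymm (by rw [h3]; exact hs.2) hs.1
      rw [this, one_smul]; exact h1
    · have e : s • y = ((t - s) / (t - 1)) • y + ((s - 1) / (t - 1)) • (t • y) := by
        rw [smul_smul, ← add_smul]
        congr 1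
        have : t - 1 ≠ 0 := by linarith
        field_simp
        ring
      rw [e]
      have hp : 0 < t - 1 := by linarith
      refine hS h1 h2 (div_nonneg (by linarith [hs.2]) hp.le) (div_nonneg (by linarith [hs.1]) hp.le) ?_
      field_simp
      ring

open Topology in
lemma hgc_start {n : ℕ} {u : EuclideanSpace ℝ (Fin n) → ℝ}
    (hc : Continuous u) (hC2 : ContDiffAt ℝ 2 u 0) (h0 : 0 < u 0)
    (hinf : ∀ ε > 0, ∃ T : ℝ, ∀ y, T ≤ ‖y‖ → u y ≤ ε * ‖y‖ ^ 2) {R : ℝ} (hR : 0 < R) :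
    ∃ r, 0 < r ∧ r ≤ R ∧ ∀ y, ‖y‖ < r → hgcInv r u y ≤ u y := by
  have hev : ∀ᶠ y in 𝓝 (0 : EuclideanSpace ℝ (Fin n)), DifferentiableAt ℝ u y ∧ fderiv ℝ u y y ≤ u y ∧ u 0 / 2 ≤ u y := by
    have c1 : ContinuousAt (fun y => fderiv ℝ u y y) 0 :=
      (hgc_diff_fderiv hC2).continuousAt.clm_apply continuousAt_id
    have e1 : ∀ᶠ y in 𝓝 (0 : EuclideanSpace ℝ (Fin n)), fderiv ℝ u y y < u 0 / 2 :=
      c1.eventually_lt_const (by simp only [map_zero]; linarith)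
    have e2 : ∀ᶠ y in 𝓝 (0 : EuclideanSpace ℝ (Fin n)), u 0 / 2 < u y :=
      hc.continuousAt.eventually_const_lt (by linarith)
    filter_upwards [e1, e2, hgc_C2_ev hC2] with y h1 h2 h3
    exact ⟨h3.differentiableAt (by norm_num), by linarith, h2.le⟩
  obtain ⟨ρ, hρ, hball⟩ := (nhds_basis_closedBall.eventually_iff).1 hev
  obtain ⟨K, hK, hKb⟩ : ∃ K : ℝ, 0 < K ∧ ∀ y, ρ ≤ ‖y‖ → u y ≤ K * ‖y‖ ^ 2 := by
    obtain ⟨T, hT⟩ := hinf 1 one_pos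
    obtain ⟨M, hMb⟩ := ((isCompact_closedBall (0 : EuclideanSpace ℝ (Fin n)) T).image hc).bddAbove
    refine ⟨1 + |M| / ρ ^ 2, by positivity, fun y hy => ?_⟩
    have hsq : ρ ^ 2 ≤ ‖y‖ ^ 2 := by gcongr
    have hq : 0 ≤ |M| / ρ ^ 2 * ‖y‖ ^ 2 := by positivity
    have hq2 : 0 ≤ ‖y‖ ^ 2 := by positivity
    rcases le_total T ‖y‖ with h | h
    · have := hT y h
      linarith
    · have h1 : u y ≤ M := hMb ⟨y, by simpa using h, rfl⟩
      have h2 : |M| ≤ |M| / ρ ^ 2 * ‖y‖ ^ 2 := by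
        rw [div_mul_eq_mul_div, le_div_iff₀ (by positivity)]
        gcongr
      have := le_abs_self M
      linarith
  obtain ⟨r, hr, hr1, hr2, hr3⟩ : ∃ r : ℝ, 0 < r ∧ r ≤ R ∧ r ≤ ρ ∧ K * r ^ 2 ≤ u 0 / 2 := by
    have t1 : Tendsto (fun r : ℝ => K * r ^ 2) (𝓝 0) (𝓝 0) := by
      have : Continuous (fun r : ℝ => K * r ^ 2) := by fun_prop
      simpa using this.tendsto 0
    have t2 := (t1.eventually (eventually_lt_nhds (half_pos h0))).and
      ((eventually_lt_nhds hR).and (eventually_lt_nhds hρ))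
    obtain ⟨ε, h1, h2⟩ := ((eventually_mem_nhdsWithin (a := (0:ℝ)) (s := Ioi 0)).and (t2.filter_mono nhdsWithin_le_nhds)).exists
    exact ⟨ε, h1, h2.2.1.le, h2.2.2.le, h2.1.le⟩
  refine ⟨r, hr, hr1, fun y hy => ?_⟩
  by_cases hy0 : y = 0
  · rw [hy0, hgc_inv_zero]; exact h0.le
  have hyn : 0 < ‖y‖ := norm_pos_iff.2 hy0
  have hymem : y ∈ closedBall (0 : EuclideanSpace ℝ (Fin n)) ρ := by simpa using hy.le.trans hr2
  rcases le_total ‖hgcPsi r y‖ ρ with h | h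
  · exact hgc_radial_inv hy0 hy.le (convex_closedBall 0 ρ) (fun z hz => ⟨(hball hz).1, (hball hz).2.1⟩) hymem
      (by simpa using h)
  · have h1 := hKb _ h
    rw [hgc_psi_norm hy0] at h1
    rw [hgcInv]
    calc ‖y‖ ^ 2 / r ^ 2 * u (hgcPsi r y) ≤ ‖y‖ ^ 2 / r ^ 2 * (K * (r ^ 2 / ‖y‖) ^ 2) := by gcongr
      _ = K * r ^ 2 := by field_simp
      _ ≤ u 0 / 2 := hr3
      _ ≤ u y := (hball hymem).2.2

open Topology in
lemma hgc_open {n k : ℕ} (hk : 1 ≤ k) (hkn : k ≤ n) {u : EuclideanSpace ℝ (Fin n) → ℝ} {c : ℝ}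
    (hc : Continuous u) (hκ : Continuous (hgcInv 1 u))
    (hC2 : ∀ y, 0 < u y → ContDiffAt ℝ 2 u y) (hσ : ∀ y, 0 < u y → sigmaK k (hgcB u y) = c)
    (hM : ∀ y, 0 < u y → hgcMono k (hgcB u y)) {R : ℝ}
    (hpos : ∀ y, ‖y‖ ≤ R → 0 < u y) (hG : ∀ y, ‖y‖ < R → gammaKPlus k (hgcB u y))
    {r : ℝ} (hr : 0 < r) (hrR : r < R) (hC : ∀ y, ‖y‖ < r → hgcInv r u y ≤ u y) :
    ∀ᶠ r' in 𝓝 r, ∀ y, ‖y‖ < r' → hgcInv r' u y ≤ u y := by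
  have hS := hgc_strict hk hkn hc hκ hC2 hσ hM hpos hG hr hrR.le hC
  have key : ∀ᶠ r' in 𝓝 r, ∀ y ∈ closedBall (0 : EuclideanSpace ℝ (Fin n)) R, ‖y‖ < r' → hgcInv r' u y ≤ u y := by
    refine (isCompact_closedBall _ _).eventually_forall_of_forall_eventually fun x0 _ => ?_
    rcases lt_trichotomy ‖x0‖ r with h | h | h
    · have h1 := (hgc_inv_joint hκ hr x0)
      have h2 : ContinuousAt (fun q : ℝ × EuclideanSpace ℝ (Fin n) => u q.2) (r, x0) :=
        hc.continuousAt.comp continuousAt_snd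
      have h3 := h1.eventually_lt h2 (hS x0 h)
      filter_upwards [h3] with q hq _
      exact hq.le
    · have hx0 : x0 ≠ 0 := by rw [← norm_pos_iff, h]; exact hr
      have hp : 0 < u x0 := hpos x0 (h.le.trans hrR.le)
      have hd := hgc_sphere hk hkn hc hC2 hσ hM hr hS h hp (hG x0 (h.trans_lt hrR))
      have hev : ∀ᶠ y in 𝓝 x0, y ≠ 0 ∧ DifferentiableAt ℝ u y ∧ fderiv ℝ u y y ≤ u y := by
        have c1 : ContinuousAt (fun y => fderiv ℝ u y y) x0 :=
          (hgc_diff_fderiv (hC2 _ hp)).continuousAt.clm_apply continuousAt_id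
        have e1 := c1.eventually_lt hc.continuousAt hd
        filter_upwards [e1, hgc_C2_ev (hC2 _ hp), isOpen_ne.mem_nhds hx0] with y h1 h2 h3
        exact ⟨h3, h2.differentiableAt (by norm_num), h1.le⟩
      obtain ⟨δ, hδ, hball⟩ := (nhds_basis_ball.eventually_iff).1 hev
      have c2 : ContinuousAt (fun q : ℝ × EuclideanSpace ℝ (Fin n) => hgcPsi q.1 q.2) (r, x0) := by
        unfold hgcPsi
        have : ‖x0‖ ^ 2 ≠ 0 := by rw [h]; positivity
        exact ((continuousAt_fst.pow 2).mul ((continuousAt_snd.norm.pow 2).inv₀ this)).smul continuousAt_snd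
      have e2 : hgcPsi r x0 = x0 := by rw [← h]; exact hgc_psi_self hx0
      have c3 : Tendsto (fun q : ℝ × EuclideanSpace ℝ (Fin n) => hgcPsi q.1 q.2) (𝓝 (r, x0)) (𝓝 x0) := by
        have := c2.tendsto
        simpa only [e2] using this
      have c4 : Tendsto (fun q : ℝ × EuclideanSpace ℝ (Fin n) => q.2) (𝓝 (r, x0)) (𝓝 x0) := continuousAt_snd
      filter_upwards [c3.eventually (ball_mem_nhds x0 hδ), c4.eventually (ball_mem_nhds x0 hδ)] with q h1 h2 h3
      exact hgc_radial_inv (hball h2).1 h3.le (convex_ball x0 δ) (fun z hz => (hball hz).2) h2 h1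
    · have c1 : ContinuousAt (fun q : ℝ × EuclideanSpace ℝ (Fin n) => ‖q.2‖) (r, x0) := continuousAt_snd.norm
      have h3 := (continuousAt_fst (p := (r, x0))).eventually_lt c1 h
      filter_upwards [h3] with q hq h4
      linarith
  filter_upwards [key, eventually_lt_nhds hrR] with r' h1 h2 y hy
  exact h1 y (by simpa using (hy.trans h2).le) hy

open Topology in
lemma hgc_MS {n k : ℕ} (hk : 1 ≤ k) (hkn : k ≤ n) {u : EuclideanSpace ℝ (Fin n) → ℝ} {c : ℝ}
    (hc : Continuous u) (hnn : ∀ y, 0 ≤ u y)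
    (hC2 : ∀ y, 0 < u y → ContDiffAt ℝ 2 u y) (hσ : ∀ y, 0 < u y → sigmaK k (hgcB u y) = c)
    (hM : ∀ y, 0 < u y → hgcMono k (hgcB u y)) {R : ℝ} (hR : 0 < R)
    (hpos : ∀ y, ‖y‖ ≤ R → 0 < u y) (hG : ∀ y, ‖y‖ < R → gammaKPlus k (hgcB u y))
    (hinf : ∀ ε > 0, ∃ T : ℝ, ∀ y, T ≤ ‖y‖ → u y ≤ ε * ‖y‖ ^ 2)
    {y0 : EuclideanSpace ℝ (Fin n)} (hy0 : ‖y0‖ = R) (hG0 : gammaKPlus k (hgcB u y0)) :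
    fderiv ℝ u y0 y0 < u y0 := by
  have hκ := hgc_kappa_cont hc hnn hinf
  have hp0 : 0 < u 0 := hpos 0 (by simpa using hR.le)
  obtain ⟨r0, hr0, hr0R, hC0⟩ := hgc_start hc (hC2 0 hp0) hp0 hinf hR
  have hclosed : IsClosed ({r | ∀ y, ‖y‖ < r → hgcInv r u y ≤ u y} ∩ Icc r0 R) := by
    refine isClosed_of_closure_subset fun r hr => ?_
    have hrI : r ∈ Icc r0 R := closure_minimal inter_subset_right isClosed_Icc hr
    refine ⟨fun y hy => ?_, hrI⟩
    by_contra hcon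
    push Not at hcon
    have hf := mem_closure_iff_frequently.1 hr
    have c1 : ContinuousAt (fun r' => hgcInv r' u y) r :=
      (hgc_inv_joint hκ (hr0.trans_le hrI.1) y).comp (f := fun r' => (r', y)) (by fun_prop)
    obtain ⟨r', h1, h2, h3⟩ := (hf.and_eventually ((c1.eventually_const_lt hcon).and (eventually_gt_nhds hy))).exists
    have := h1.1 y h3
    linarith
  have hall := hclosed.Icc_subset_of_forall_exists_gt (a := r0) (b := R) hC0 (fun r hr s hs => by
    have h1 := hgc_open hk hkn hc hκ hC2 hσ hM hpos hG (hr0.trans_le hr.2.1) hr.2.2 hr.1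
    have h2 : Ioc r s ∈ 𝓝[>] r := Ioc_mem_nhdsGT hs
    obtain ⟨r', h3, h4⟩ := ((h1.filter_mono nhdsWithin_le_nhds).and h2).exists
    exact ⟨r', h3, h4⟩)
  have hCR : ∀ y, ‖y‖ < R → hgcInv R u y ≤ u y := hall (right_mem_Icc.2 hr0R)
  have hSR := hgc_strict hk hkn hc hκ hC2 hσ hM hpos hG hR le_rfl hCR
  exact hgc_sphere hk hkn hc hC2 hσ hM hR hSR hy0 (hpos _ hy0.le) hG0


lemma hgc_B_congr {n : ℕ} {u w : EuclideanSpace ℝ (Fin n) → ℝ} {x : EuclideanSpace ℝ (Fin n)}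
    (h : u =ᶠ[nhds x] w) : hgcB u x = hgcB w x := by
  have h1 : ∀ j, pd u j =ᶠ[nhds x] pd w j := fun j => by
    filter_upwards [h.fderiv (𝕜 := ℝ)] with y hy
    simp only [pd, hy]
  have h2 : ∀ i j, pd (pd u j) i x = pd (pd w j) i x := fun i j => by
    rw [pd, pd, (h1 j).fderiv_eq]
  ext i j
  simp only [hgcB, h2, h.eq_of_nhds, fun l => (h1 l).eq_of_nhds]

lemma hgc_pd_trans {n : ℕ} (u : EuclideanSpace ℝ (Fin n) → ℝ) (p : EuclideanSpace ℝ (Fin n)) (i : Fin n) :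
    pd (fun y => u (p + y)) i = fun y => pd u i (p + y) := by
  funext y
  rw [pd, fderiv_comp_add_left, pd]

lemma hgc_B_trans {n : ℕ} (u : EuclideanSpace ℝ (Fin n) → ℝ) (p x : EuclideanSpace ℝ (Fin n)) :
    hgcB (fun y => u (p + y)) x = hgcB u (p + x) := by
  ext i j
  simp only [hgcB, hgc_pd_trans]

lemma hgc_C2_trans {n : ℕ} {u : EuclideanSpace ℝ (Fin n) → ℝ} {p x : EuclideanSpace ℝ (Fin n)}
    (h : ContDiffAt ℝ 2 u (p + x)) : ContDiffAt ℝ 2 (fun y => u (p + y)) x :=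
  ContDiffAt.comp x h (contDiffAt_const.add contDiffAt_id)

lemma hgc_pd_rpow {n : ℕ} {v : EuclideanSpace ℝ (Fin n) → ℝ} {x : EuclideanSpace ℝ (Fin n)}
    (hv : DifferentiableAt ℝ v x) (hpos : 0 < v x) (β : ℝ) (i : Fin n) :
    pd (fun y => v y ^ β) i x = β * v x ^ (β - 1) * pd v i x := by
  rw [pd, (hv.hasFDerivAt.rpow_const (Or.inl hpos.ne')).fderiv]
  rfl

open Topology in
lemma hgc_pd2_rpow {n : ℕ} {v : EuclideanSpace ℝ (Fin n) → ℝ} {x : EuclideanSpace ℝ (Fin n)}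
    (hv : ContDiffAt ℝ 2 v x) (hpos : 0 < v x) (β : ℝ) (i j : Fin n) :
    pd (pd (fun y => v y ^ β) j) i x = β * (β - 1) * v x ^ (β - 2) * pd v i x * pd v j x
      + β * v x ^ (β - 1) * pd (pd v j) i x := by
  have hev : pd (fun y => v y ^ β) j =ᶠ[𝓝 x] fun y => β * v y ^ (β - 1) * pd v j y := by
    filter_upwards [hgc_C2_ev hv, hv.continuousAt.eventually_const_lt hpos] with y h1 h2
    exact hgc_pd_rpow (h1.differentiableAt (by norm_num)) h2 β j
  have d1 := ((hv.differentiableAt (by norm_num)).hasFDerivAt.rpow_const (p := β - 1) (Or.inl hpos.ne')).const_mul β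
  have d2 : DifferentiableAt ℝ (pd v j) x := (hgc_diff_fderiv hv).clm_apply (differentiableAt_const _)
  have d3 := d1.mul d2.hasFDerivAt
  have d4 : HasFDerivAt (fun y => β * v y ^ (β - 1) * pd v j y) _ x := d3
  rw [pd, hev.fderiv_eq, d4.fderiv]
  have e : β - 1 - 1 = β - 2 := by ring
  simp only [add_apply, smul_apply, smul_eq_mul, e]
  simp only [pd]
  ring

lemma hgc_schouten {n : ℕ} (hn : 3 ≤ n) {v : EuclideanSpace ℝ (Fin n) → ℝ} {x : EuclideanSpace ℝ (Fin n)}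
    (hv : ContDiffAt ℝ 2 v x) (hpos : 0 < v x) {β : ℝ} (hβ : β = -2 / ((n : ℝ) - 2)) :
    hgcB (fun y => v y ^ β) x = ((v x ^ β) ^ 2) • schoutenMatrix v x := by
  have hn2 : (n : ℝ) - 2 ≠ 0 := by
    have : (3 : ℝ) ≤ n := by exact_mod_cast hn
    intro h; linarith
  have e1 : v x ^ (β - 1) = v x ^ β * (v x)⁻¹ := by
    rw [Real.rpow_sub hpos, Real.rpow_one, div_eq_mul_inv]
  have e2 : v x ^ (β - 2) = v x ^ β * ((v x)⁻¹) ^ 2 := by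
    rw [Real.rpow_sub hpos, Real.rpow_two, div_eq_mul_inv, inv_pow]
  ext i j
  rw [Matrix.smul_apply]
  simp only [hgcB, schoutenMatrix, hgc_pd2_rpow hv hpos, hgc_pd_rpow (hv.differentiableAt (by norm_num)) hpos, e1, e2, smul_eq_mul]
  have e3 : ∀ l, (β * (v x ^ β * (v x)⁻¹) * pd v l x) ^ 2 = (β * (v x ^ β * (v x)⁻¹)) ^ 2 * (pd v l x) ^ 2 := fun l => by ring
  simp_rw [e3]
  rw [← Finset.mul_sum]
  have e4 : β * (β - 1) = 2 * n / ((n : ℝ) - 2) ^ 2 := by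
    rw [hβ]; field_simp; try ring
  have e5 : β ^ 2 = 2 * (2 / ((n : ℝ) - 2) ^ 2) := by
    rw [hβ]; field_simp; try norm_num
  have e6 : -(2 / ((n : ℝ) - 2)) = β := by rw [hβ]; ring
  rw [← e4, e6]
  have e7 : 2 / ((n : ℝ) - 2) ^ 2 = β ^ 2 / 2 := by rw [e5]; ring
  rw [e7]
  ring

lemma hgc_sigma_smul {n : ℕ} (t : ℝ) (M : Matrix (Fin n) (Fin n) ℝ) {j : ℕ} (hj : j ≤ n) (ht : t ≠ 0) :
    sigmaK j (t • M) = t ^ j * sigmaK j M := by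
  have h1 : (t • M).charpoly = Polynomial.C (t ^ n) * M.charpoly.comp (Polynomial.C t⁻¹ * Polynomial.X) := by
    refine Polynomial.funext fun x => ?_
    rw [Polynomial.eval_mul, Polynomial.eval_C, Polynomial.eval_comp, Polynomial.eval_mul, Polynomial.eval_C,
      Polynomial.eval_X, Matrix.eval_charpoly, Matrix.eval_charpoly]
    have : Matrix.scalar (Fin n) x - t • M = t • (Matrix.scalar (Fin n) (t⁻¹ * x) - M) := by
      ext a b
      simp only [Matrix.sub_apply, Matrix.smul_apply, Matrix.scalar_apply, Matrix.diagonal_apply, smul_eq_mul]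
      split_ifs
      · field_simp
      · ring
    rw [this, Matrix.det_smul, Fintype.card_fin]
  rw [sigmaK, sigmaK, h1, Polynomial.coeff_C_mul, Polynomial.comp_C_mul_X_coeff]
  have h2 : t ^ n * (t⁻¹) ^ (n - j) = t ^ j := by
    have : t ^ n = t ^ j * t ^ (n - j) := by rw [← pow_add]; congr 1; omega
    rw [this, mul_assoc, ← mul_pow, mul_inv_cancel₀ ht, one_pow, mul_one]
  linear_combination (-1) ^ j * M.charpoly.coeff (n - j) * h2


open Topology in
lemma hgc_up {n k : ℕ} (hk : 1 ≤ k) (hkn : k ≤ n) {c : ℝ} {W G : EuclideanSpace ℝ (Fin n) → ℝ}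
    (hWc : Continuous W) (hnn : ∀ y, 0 ≤ W y)
    (hC2 : ∀ y, 0 < W y → ContDiffAt ℝ 2 W y) (hσ : ∀ y, 0 < W y → sigmaK k (hgcB W y) = c)
    (hΓ : ∀ y, 0 < W y → gammaKPlus k (hgcB W y))
    (hG : ContDiffAt ℝ 2 G 0) (hG0 : 0 < G 0) (hGW : ∀ᶠ y in 𝓝[≠] 0, G y = hgcInv 1 W y) [Nontrivial (EuclideanSpace ℝ (Fin n))] :
    ∃ U : EuclideanSpace ℝ (Fin n) → ℝ, Continuous U ∧ (∀ y, 0 ≤ U y) ∧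
      (∀ y, 0 < U y → ContDiffAt ℝ 2 U y) ∧ (∀ y, 0 < U y → sigmaK k (hgcB U y) = c) ∧
      (∀ y, 0 < U y → hgcMono k (hgcB U y)) ∧ (∀ y, y ≠ 0 → 0 < U y → gammaKPlus k (hgcB U y)) ∧
      0 < U 0 ∧ (∀ y, y ≠ 0 → U =ᶠ[𝓝 y] hgcInv 1 W) := by
  classical
  set U := Function.update (hgcInv 1 W) 0 (G 0) with hU
  have hU0 : U 0 = G 0 := by simp [hU]
  have hUn : ∀ y, y ≠ 0 → U y = hgcInv 1 W y := fun y hy => by simp [hU, hy]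
  have hUe : ∀ y, y ≠ 0 → U =ᶠ[𝓝 y] hgcInv 1 W := fun y hy => by
    filter_upwards [isOpen_ne.mem_nhds hy] with z hz using hUn z hz
  have hUG : U =ᶠ[𝓝 0] G := by
    filter_upwards [eventually_nhdsWithin_iff.1 hGW] with z hz
    by_cases h : z = 0
    · rw [h, hU0]
    · rw [hUn z h, hz h]
  have hUC0 : ContDiffAt ℝ 2 U 0 := hG.congr_of_eventuallyEq hUG
  have hr : (1 : ℝ) ≠ 0 := one_ne_zero
  have hWp : ∀ y, y ≠ 0 → 0 < U y → 0 < W (hgcPsi 1 y) := fun y hy h => by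
    rw [hUn y hy, hgcInv] at h
    exact pos_of_mul_pos_right h (by positivity)
  have hC : ∀ y, y ≠ 0 → 0 < U y → ContDiffAt ℝ 2 U y := fun y hy h =>
    (hgc_inv_contDiffAt hy 1 (hC2 _ (hWp y hy h))).congr_of_eventuallyEq (hUe y hy)
  have hS : ∀ y, y ≠ 0 → 0 < U y → sigmaK k (hgcB U y) = c := fun y hy h => by
    rw [hgc_B_congr (hUe y hy), hgc_inv_sigma hy hr (hC2 _ (hWp y hy h)), hσ _ (hWp y hy h)]
  have hGa : ∀ y, y ≠ 0 → 0 < U y → gammaKPlus k (hgcB U y) := fun y hy h => by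
    rw [hgc_B_congr (hUe y hy)]
    exact hgc_inv_gamma hy hr (hC2 _ (hWp y hy h)) (hΓ _ (hWp y hy h))
  have hM : ∀ y, y ≠ 0 → 0 < U y → hgcMono k (hgcB U y) := fun y hy h => 
    hgc_mono k hk hkn _ (hgc_B_herm (hC y hy h)) (hGa y hy h)
  have hUpos : ∀ᶠ y in 𝓝[≠] (0 : EuclideanSpace ℝ (Fin n)), y ≠ 0 ∧ 0 < U y := by
    filter_upwards [self_mem_nhdsWithin, (hUC0.continuousAt.eventually_const_lt (hU0 ▸ hG0)).filter_mono nhdsWithin_le_nhds] with y h1 h2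
    exact ⟨h1, h2⟩
  have hBt : Tendsto (hgcB U) (𝓝[≠] 0) (𝓝 (hgcB U 0)) := (hgc_B_cont hUC0).tendsto.mono_left nhdsWithin_le_nhds
  haveI : (𝓝[≠] (0 : EuclideanSpace ℝ (Fin n))).NeBot := Module.punctured_nhds_neBot ℝ _ 0
  refine ⟨U, ?_, ?_, ?_, ?_, ?_, hGa, hU0 ▸ hG0, hUe⟩
  · refine continuous_iff_continuousAt.2 fun y => ?_
    by_cases h : y = 0
    · rw [h]; exact hUC0.continuousAt
    · refine ContinuousAt.congr ?_ (hUe y h).symm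
      exact ((continuous_norm.pow 2).div_const _).continuousAt.mul
        (hWc.continuousAt.comp (hgc_psi_contDiffAt (m := 0) h 1).continuousAt)
  · intro y
    by_cases h : y = 0
    · rw [h, hU0]; exact hG0.le
    · rw [hUn y h, hgcInv]; exact mul_nonneg (by positivity) (hnn _)
  · intro y h
    by_cases h0 : y = 0
    · rw [h0]; exact hUC0
    · exact hC y h0 h
  · intro y h
    by_cases h0 : y = 0
    · rw [h0]
      have t1 := ((hgc_sigma_continuous k).tendsto (hgcB U 0)).comp hBt
      refine tendsto_nhds_unique t1 (tendsto_const_nhds.congr' ?_)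
      filter_upwards [hUpos] with z hz using (hS z hz.1 hz.2).symm
    · exact hS y h0 h
  · intro y h
    by_cases h0 : y = 0
    · rw [h0]
      refine (hgc_mono_closed k).mem_of_tendsto hBt ?_
      filter_upwards [hUpos] with z hz using hM z hz.1 hz.2
    · exact hM y h0 h


open Topology in
lemma hgc_main_u {n k : ℕ} (hk : 1 ≤ k) (hkn : k ≤ n) {c : ℝ} {W G : EuclideanSpace ℝ (Fin n) → ℝ}
    (hWc : Continuous W) (hnn : ∀ y, 0 ≤ W y)
    (hC2 : ∀ y, 0 < W y → ContDiffAt ℝ 2 W y) (hσ : ∀ y, 0 < W y → sigmaK k (hgcB W y) = c)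
    (hΓ : ∀ y, 0 < W y → gammaKPlus k (hgcB W y))
    (hG : ContDiffAt ℝ 2 G 0) (hG0 : 0 < G 0) (hGW : ∀ᶠ y in 𝓝[≠] 0, G y = hgcInv 1 W y) 
    (hW0 : W 0 = 0) {i : Fin n} {a : ℝ} (ha : 0 < a) (hWpos : ∀ z : EuclideanSpace ℝ (Fin n), a ≤ z i → 0 < W z)
    {z0 : EuclideanSpace ℝ (Fin n)} (hz0 : z0 i = a) :
    0 < fderiv ℝ W z0 (EuclideanSpace.single i 1) := by
  have hnt : Nontrivial (EuclideanSpace ℝ (Fin n)) :=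
    ⟨⟨EuclideanSpace.single i 1, 0, fun h => by simpa using congrArg (fun z : EuclideanSpace ℝ (Fin n) => z i) h⟩⟩
  obtain ⟨U, hUc, hUnn, hU2, hUσ, hUM, hUΓ, hU0, hUe⟩ := hgc_up hk hkn hWc hnn hC2 hσ hΓ hG hG0 hGW
  set R : ℝ := 1 / (2 * a) with hRdef
  have hR : 0 < R := by positivity
  set s : EuclideanSpace ℝ (Fin n) := R • EuclideanSpace.single i 1 with hs
  have hsn : ‖s‖ = R := by
    rw [hs, norm_smul, PiLp.norm_single, Real.norm_of_nonneg hR.le]; simp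
  have hsi : ∀ z : EuclideanSpace ℝ (Fin n), inner ℝ s z = R * z i := fun z => by
    rw [hs, real_inner_smul_left, EuclideanSpace.inner_single_left]; simp
  have hexp : ∀ y : EuclideanSpace ℝ (Fin n), ‖y‖ ^ 2 = ‖s + y‖ ^ 2 - 2 * R * (s + y) i + R ^ 2 := fun y => by
    have h1 : y = (s + y) - s := by abel
    conv_lhs => rw [h1]
    rw [norm_sub_sq_real, real_inner_comm, hsi, hsn]; ring
  have hRa : 2 * R * a = 1 := by rw [hRdef]; field_simp
  -- positivity
  have hpos : ∀ y, ‖y‖ ≤ R → 0 < U (s + y) := by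
    intro y hy
    by_cases h0 : s + y = 0
    · rw [h0]; exact hU0
    · have hN : 0 < ‖s + y‖ ^ 2 := by have := norm_pos_iff.2 h0; positivity
      rw [(hUe _ h0).eq_of_nhds, hgcInv]
      refine mul_pos (by positivity) (hWpos _ ?_)
      have h2 : ‖y‖ ^ 2 ≤ R ^ 2 := by gcongr
      rw [hexp] at h2
      have h3 : ‖s + y‖ ^ 2 ≤ 2 * R * (s + y) i := by linarith
      have h4 : hgcPsi 1 (s + y) i = (‖s + y‖ ^ 2)⁻¹ * (s + y) i := by
        rw [hgcPsi, one_pow, one_mul]; rfl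
      rw [h4, ← div_eq_inv_mul, le_div_iff₀ hN]
      calc a * ‖s + y‖ ^ 2 ≤ a * (2 * R * (s + y) i) := by gcongr
        _ = (s + y) i := by linear_combination (s + y) i * hRa
  have hne : ∀ y, ‖y‖ < R → s + y ≠ 0 := fun y hy h0 => by
    have h1 : y = -s := by rw [eq_neg_iff_add_eq_zero, add_comm]; exact h0
    rw [h1, norm_neg, hsn] at hy
    exact lt_irrefl _ hy
  have hz0n : z0 ≠ 0 := fun h => by rw [h] at hz0; simp at hz0; linarith
  have hz0p : 0 < ‖z0‖ := norm_pos_iff.2 hz0n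
  set Y := hgcPsi 1 z0 with hY
  have hYn : ‖Y‖ = 1 / ‖z0‖ := by rw [hY, hgc_psi_norm hz0n, one_pow]
  have hYp : 0 < ‖Y‖ := by rw [hYn]; positivity
  have hY0 : Y ≠ 0 := norm_pos_iff.1 hYp
  have hYi : Y i = (‖z0‖ ^ 2)⁻¹ * a := by
    rw [← hz0, hY, hgcPsi, one_pow, one_mul]; rfl
  have hYY : hgcPsi 1 Y = z0 := by
    rw [hgcPsi, hYn, hY, hgcPsi, smul_smul]
    have : 1 ^ 2 * ((1 / ‖z0‖) ^ 2)⁻¹ * (1 ^ 2 * (‖z0‖ ^ 2)⁻¹) = 1 := by field_simp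
    rw [this, one_smul]
  set b := Y - s with hb
  have hsb : s + b = Y := by rw [hb]; abel
  have hYi' : 2 * R * Y i = ‖Y‖ ^ 2 := by
    rw [hYi, hYn]; linear_combination (‖z0‖ ^ 2)⁻¹ * hRa
  have hbn : ‖b‖ = R := by
    have := hexp b
    rw [hsb, hYi'] at this
    have h2 : ‖b‖ ^ 2 = R ^ 2 := by linarith
    exact (pow_left_inj₀ (norm_nonneg _) hR.le two_ne_zero).1 h2
  have hUpY : 0 < U Y := by rw [← hsb]; exact hpos b hbn.le
  have key := hgc_MS hk hkn (u := fun y => U (s + y)) (c := c) (by fun_prop) (fun y => hUnn _)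
    (fun y h => hgc_C2_trans (hU2 _ h)) (fun y h => by rw [hgc_B_trans]; exact hUσ _ h)
    (fun y h => by rw [hgc_B_trans]; exact hUM _ h) hR hpos
    (fun y h => by rw [hgc_B_trans]; exact hUΓ _ (hne y h) (hpos y h.le)) ?_ hbn
    (by rw [hgc_B_trans, hsb]; exact hUΓ _ hY0 hUpY)
  · rw [fderiv_comp_add_left, hsb, (hUe Y hY0).fderiv_eq, (hUe Y hY0).eq_of_nhds,
      hgc_inv_fderiv hY0 one_ne_zero (by
        rw [hYY]; exact (hC2 _ (hWpos _ hz0.ge)).differentiableAt (by norm_num)), hYY, hgcInv, hYY] at key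
    have hin : inner ℝ Y b = ‖Y‖ ^ 2 / 2 := by
      rw [hb, inner_sub_right, real_inner_self_eq_norm_sq, real_inner_comm, hsi]; linarith
    have hO : hgcO Y b = -s := by
      rw [hgcO, hin]
      have : 2 * (‖Y‖ ^ 2 / 2) * (‖Y‖ ^ 2)⁻¹ = 1 := by field_simp
      rw [this, one_smul, hb]; abel
    rw [hin, hO, map_neg, hs, map_smul, smul_eq_mul] at key
    have h5 : 0 < R * fderiv ℝ W z0 (EuclideanSpace.single i 1) := by
      have : ∀ q : ℝ, (2 / 1 ^ 2 : ℝ) * W z0 * (‖Y‖ ^ 2 / 2) + q = ‖Y‖ ^ 2 / 1 ^ 2 * W z0 + q := fun q => by ring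
      rw [this] at key
      linarith
    exact pos_of_mul_pos_right h5 hR.le
  · intro ε hε
    have hev : ∀ᶠ z in 𝓝 (0 : EuclideanSpace ℝ (Fin n)), W z < ε / 4 :=
      hWc.continuousAt.eventually_lt_const (by rw [hW0]; positivity)
    obtain ⟨δ, hδ, hδW⟩ := Metric.eventually_nhds_iff.1 hev
    refine ⟨R + 2 / δ, fun y hy => ?_⟩
    have hle : ‖s + y‖ ≤ 2 * ‖y‖ := by
      have := norm_add_le s y
      have : 0 < 2 / δ := by positivity
      linarith
    have hge : 2 / δ ≤ ‖s + y‖ := by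
      have := norm_sub_le (s + y) s
      rw [add_sub_cancel_left] at this
      linarith
    have hp : 0 < ‖s + y‖ := lt_of_lt_of_le (by positivity) hge
    have h0 : s + y ≠ 0 := norm_pos_iff.1 hp
    have hWs : W (hgcPsi 1 (s + y)) < ε / 4 := by
      apply hδW
      rw [dist_zero_right, hgc_psi_norm h0, one_pow, div_lt_iff₀ hp]
      rw [div_le_iff₀ hδ] at hge
      linarith
    show U (s + y) ≤ _
    rw [(hUe _ h0).eq_of_nhds, hgcInv]
    calc ‖s + y‖ ^ 2 / 1 ^ 2 * W (hgcPsi 1 (s + y)) ≤ (2 * ‖y‖) ^ 2 / 1 ^ 2 * (ε / 4) := by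
          gcongr
          exact hnn _
      _ = ε * ‖y‖ ^ 2 := by ring


open Topology in
lemma hgc_notin {n : ℕ} (P : Finset (EuclideanSpace ℝ (Fin n))) (p : EuclideanSpace ℝ (Fin n)) :
    ∀ᶠ y in 𝓝[≠] (0 : EuclideanSpace ℝ (Fin n)), p + hgcPsi 1 y ∉ P := by
  set M := ∑ q ∈ P, ‖q - p‖ + 1 with hM
  have hMp : 0 < M := by positivity
  have h1 : ∀ᶠ y in 𝓝[≠] (0 : EuclideanSpace ℝ (Fin n)), ‖y‖ < 1 / M :=
    (continuous_norm.continuousAt.eventually_lt_const (by simp only [norm_zero]; positivity)).filter_mono nhdsWithin_le_nhds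
  filter_upwards [h1, self_mem_nhdsWithin] with y hy hy0 hin
  have h2 := Finset.single_le_sum (f := fun q => ‖q - p‖) (fun q _ => norm_nonneg _) hin
  have h3 : ‖p + hgcPsi 1 y - p‖ = 1 / ‖y‖ := by rw [add_sub_cancel_left, hgc_psi_norm hy0, one_pow]
  simp only [h3] at h2
  have hyp : 0 < ‖y‖ := norm_pos_iff.2 hy0
  rw [lt_div_iff₀ hMp] at hy
  rw [div_le_iff₀ hyp] at h2
  nlinarith

open Topology in
lemma hgc_kelvin {n : ℕ} (hn : 3 ≤ n) {v : EuclideanSpace ℝ (Fin n) → ℝ} (P : Finset (EuclideanSpace ℝ (Fin n)))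
    (p : EuclideanSpace ℝ (Fin n)) (hv_pos : ∀ x, x ∉ P → 0 < v x) (hkel : kelvinExtendsC2PosAtZero v)
    {β : ℝ} (hβ : β = -2 / ((n : ℝ) - 2)) :
    ∃ G : EuclideanSpace ℝ (Fin n) → ℝ, ContDiffAt ℝ 2 G 0 ∧ 0 < G 0 ∧
      ∀ᶠ y in 𝓝[≠] 0, G y = ‖y‖ ^ 2 * v (p + hgcPsi 1 y) ^ β := by
  obtain ⟨w, ε, hε, hw, hw0, hwv⟩ := hkel
  have hn2 : (n : ℝ) - 2 ≠ 0 := by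
    have : (3 : ℝ) ≤ n := by exact_mod_cast hn
    intro h; linarith
  set q : EuclideanSpace ℝ (Fin n) → ℝ := fun y => 1 + 2 * inner ℝ p y + ‖p‖ ^ 2 * ‖y‖ ^ 2 with hq
  set z : EuclideanSpace ℝ (Fin n) → EuclideanSpace ℝ (Fin n) := fun y => (q y)⁻¹ • (y + ‖y‖ ^ 2 • p) with hz
  have hq0 : q 0 = 1 := by simp [hq]
  have hz0 : z 0 = 0 := by simp [hz]
  have hqC : ContDiffAt ℝ 2 q 0 :=
    (contDiffAt_const.add (contDiffAt_const.mul (contDiffAt_const.inner ℝ contDiffAt_id))).add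
      (contDiffAt_const.mul (contDiffAt_id.norm_sq ℝ))
  have hzC : ContDiffAt ℝ 2 z 0 :=
    (hqC.inv (by rw [hq0]; exact one_ne_zero)).smul (contDiffAt_id.add ((contDiffAt_id.norm_sq ℝ).smul contDiffAt_const))
  have hwC : ContDiffAt ℝ 2 w 0 := hw.contDiffAt (ball_mem_nhds 0 hε)
  have hwzC : ContDiffAt ℝ 2 (fun y => w (z y)) 0 := ContDiffAt.comp 0 (by rw [hz0]; exact hwC) hzC
  refine ⟨fun y => q y * w (z y) ^ β, hqC.mul (hwzC.rpow_const_of_ne (by rw [hz0]; exact hw0.ne')), ?_, ?_⟩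
  · simp only [hq0, hz0]; positivity
  · have e1 : ∀ᶠ y in 𝓝[≠] 0, 0 < q y :=
      (hqC.continuousAt.eventually_const_lt (by rw [hq0]; exact one_pos)).filter_mono nhdsWithin_le_nhds
    have e2 : ∀ᶠ y in 𝓝[≠] 0, ‖z y‖ < ε :=
      (hzC.continuousAt.norm.eventually_lt_const (by simp only [hz0, norm_zero]; exact hε)).filter_mono nhdsWithin_le_nhds
    filter_upwards [e1, e2, hgc_notin P p, self_mem_nhdsWithin] with y h1 h2 h3 h4
    have hy : 0 < ‖y‖ := norm_pos_iff.2 h4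
    have g1 : ‖y + ‖y‖ ^ 2 • p‖ ^ 2 = ‖y‖ ^ 2 * q y := by
      rw [norm_add_sq_real, real_inner_smul_right, norm_smul, Real.norm_of_nonneg (by positivity), real_inner_comm]
      simp only [hq]; ring
    have g2 : ‖z y‖ ^ 2 = ‖y‖ ^ 2 / q y := by
      simp only [hz]
      rw [norm_smul, mul_pow, g1, Real.norm_of_nonneg (by positivity)]
      field_simp
    have g3 : 0 < ‖z y‖ := by
      have : 0 < ‖z y‖ ^ 2 := by rw [g2]; positivity
      exact (norm_nonneg _).lt_of_ne' fun h => by rw [h] at this; norm_num at this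
    have g4 : (‖z y‖ ^ 2)⁻¹ • z y = p + hgcPsi 1 y := by
      rw [g2, hgcPsi, one_pow, one_mul]
      simp only [hz]
      have a1 : (‖y‖ ^ 2 / q y)⁻¹ * (q y)⁻¹ = (‖y‖ ^ 2)⁻¹ := by field_simp
      have a2 : (‖y‖ ^ 2)⁻¹ * ‖y‖ ^ 2 = 1 := by field_simp
      rw [smul_smul, a1, smul_add, smul_smul, a2, one_smul, add_comm]
    have g5 := hwv (z y) (by rwa [mem_ball_zero_iff]) (norm_pos_iff.1 g3)
    have hvX := hv_pos _ h3
    rw [g5, g4, Real.mul_rpow (by positivity) hvX.le, ← Real.rpow_mul g3.le]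
    have g6 : (2 - (n : ℝ)) * β = (2 : ℕ) := by rw [hβ]; push_cast; field_simp; ring
    rw [g6, Real.rpow_natCast, g2]
    field_simp

open Topology in
lemma hgc_ub_cont {n : ℕ} {v : EuclideanSpace ℝ (Fin n) → ℝ} (P : Finset (EuclideanSpace ℝ (Fin n)))
    [DecidablePred (· ∈ P)]
    (hv_pos : ∀ x, x ∉ P → 0 < v x) (hvc : ∀ x, x ∉ P → ContinuousAt v x)
    (hblow : ∀ p ∈ P, Tendsto v (nhdsWithin p ((P : Set (EuclideanSpace ℝ (Fin n)))ᶜ)) atTop)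
    {β : ℝ} (hβ : β < 0) :
    Continuous (fun x => if x ∈ P then 0 else v x ^ β) := by
  refine continuous_iff_continuousAt.2 fun x => ?_
  by_cases hx : x ∈ P
  · have h1 : Tendsto (fun x => v x ^ β) (𝓝[(P : Set (EuclideanSpace ℝ (Fin n)))ᶜ] x) (𝓝 0) := by
      have h := (tendsto_rpow_neg_atTop (neg_pos.2 hβ)).comp (hblow x hx)
      rw [neg_neg] at h
      exact h
    rw [ContinuousAt, if_pos hx, Metric.tendsto_nhds]
    intro ε hε
    filter_upwards [eventually_nhdsWithin_iff.1 ((Metric.tendsto_nhds.1 h1) ε hε)] with y hy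
    by_cases hyP : y ∈ P
    · simpa [hyP] using hε
    · simpa [hyP] using hy (by simpa using hyP)
  · have hP : ∀ᶠ y in 𝓝 x, y ∉ P := P.finite_toSet.isClosed.isOpen_compl.mem_nhds (by simpa using hx)
    refine ((hvc x hx).rpow_const (p := β) (Or.inl (hv_pos x hx).ne')).congr ?_
    filter_upwards [hP] with y hy
    simp [hy]


/-- **Geodesic convexity of the hyperplane `{xₙ = 0}`.**  If all the singular points of `P`
lie in the open lower half-space, `v` is a positive `C⁴` solution of
`σ_k(A_v) = binom(n,k)(1/2)^k v^{4k/(n-2)}` on `ℝⁿ \ P` in the `Γ_k⁺` cone, the Kelvin transform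
of `v` extends to a `C²` function positive at the origin, and `v` blows up at each singular
point, then `∂v/∂xₙ < 0` on the hyperplane `{xₙ = 0}`; in particular the scalar second
fundamental form factor `-(2/(n-2)) v⁻¹ ∂v/∂xₙ` of `{xₙ = 0}` with respect to
`g_v = v^{4/(n-2)} g_E` is positive, i.e. the hyperplane is geodesically convex. -/
theorem hyperplane_geodesically_convex
    (n k : ℕ) (hn : 3 ≤ n) (hk : 1 ≤ k) (hkn : 2 * k < n)
    (P : Finset (EuclideanSpace ℝ (Fin n))) (hP : P.Nonempty)
    (hPneg : ∀ p ∈ P, p ⟨n - 1, by omega⟩ < 0)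
    (v : EuclideanSpace ℝ (Fin n) → ℝ)
    (hv_pos : ∀ x, x ∉ P → 0 < v x)
    (hv_smooth : ContDiffOn ℝ 4 v ((P : Set (EuclideanSpace ℝ (Fin n)))ᶜ))
    (hv_cone : ∀ x, x ∉ P → gammaKPlus k (schoutenMatrix v x))
    (hv_eq : ∀ x, x ∉ P →
      sigmaK k (schoutenMatrix v x) =
        (n.choose k : ℝ) * (1 / 2) ^ k * v x ^ ((4 * (k : ℝ)) / ((n : ℝ) - 2)))
    (hkelvin : kelvinExtendsC2PosAtZero v)
    (hblow : ∀ p ∈ P,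
      Tendsto v (nhdsWithin p ((P : Set (EuclideanSpace ℝ (Fin n)))ᶜ)) atTop) :
    ∀ x : EuclideanSpace ℝ (Fin n), x ⟨n - 1, by omega⟩ = 0 →
      pd v ⟨n - 1, by omega⟩ x < 0 ∧
      0 < -(2 / ((n : ℝ) - 2)) * (v x)⁻¹ * pd v ⟨n - 1, by omega⟩ x := by
  classical
  intro x hx
  set i : Fin n := ⟨n - 1, by omega⟩ with hi
  obtain ⟨p, hp⟩ := hP
  have hn2 : (0 : ℝ) < (n : ℝ) - 2 := by
    have : (3 : ℝ) ≤ n := by exact_mod_cast hn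
    linarith
  obtain ⟨β, hβ⟩ : ∃ β : ℝ, β = -2 / ((n : ℝ) - 2) := ⟨_, rfl⟩
  have hβn : β < 0 := by rw [hβ]; exact div_neg_of_neg_of_pos (by norm_num) hn2
  have hPo : ∀ y, y ∉ P → ((P : Set (EuclideanSpace ℝ (Fin n)))ᶜ) ∈ nhds y := fun y hy =>
    P.finite_toSet.isClosed.isOpen_compl.mem_nhds (by simpa using hy)
  have hv2 : ∀ y, y ∉ P → ContDiffAt ℝ 2 v y := fun y hy =>
    (hv_smooth.contDiffAt (hPo y hy)).of_le (by norm_num)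
  set u : EuclideanSpace ℝ (Fin n) → ℝ := fun x => if x ∈ P then 0 else v x ^ β with hu
  have huc : Continuous u := hgc_ub_cont P hv_pos (fun y hy => (hv2 y hy).continuousAt) hblow hβn
  have hue : ∀ y, y ∉ P → u =ᶠ[nhds y] fun z => v z ^ β := fun y hy => by
    filter_upwards [hPo y hy] with z hz
    have hz' : z ∉ P := by simpa using hz
    simp [hu, hz']
  have hunP : ∀ y, 0 < u y → y ∉ P := fun y hy h => by simp [hu, h] at hy
  have hupos : ∀ y, y ∉ P → 0 < u y := fun y hy => by
    rw [(hue y hy).eq_of_nhds]; exact Real.rpow_pos_of_pos (hv_pos y hy) _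
  have hunn : ∀ y, 0 ≤ u y := fun y => by
    by_cases h : y ∈ P
    · simp [hu, h]
    · exact (hupos y h).le
  have hu2 : ∀ y, y ∉ P → ContDiffAt ℝ 2 u y := fun y hy =>
    ((hv2 y hy).rpow_const_of_ne (hv_pos y hy).ne').congr_of_eventuallyEq (hue y hy)
  have huB : ∀ y, y ∉ P → hgcB u y = ((v y ^ β) ^ 2) • schoutenMatrix v y := fun y hy => by
    rw [hgc_B_congr (hue y hy), hgc_schouten hn (hv2 y hy) (hv_pos y hy) hβ]
  have huΓ : ∀ y, y ∉ P → gammaKPlus k (hgcB u y) := fun y hy j h1 h2 => by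
    have ht : 0 < (v y ^ β) ^ 2 := pow_pos (Real.rpow_pos_of_pos (hv_pos y hy) _) 2
    rw [huB y hy, hgc_sigma_smul _ _ (by omega) ht.ne']
    exact mul_pos (pow_pos ht _) (hv_cone y hy j h1 h2)
  have huσ : ∀ y, y ∉ P → sigmaK k (hgcB u y) = (n.choose k : ℝ) * (1 / 2) ^ k := fun y hy => by
    have hvp := hv_pos y hy
    have ht : 0 < (v y ^ β) ^ 2 := pow_pos (Real.rpow_pos_of_pos hvp _) 2
    rw [huB y hy, hgc_sigma_smul _ _ (by omega) ht.ne', hv_eq y hy]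
    have h1 : ((v y ^ β) ^ 2) ^ k * v y ^ ((4 * (k : ℝ)) / ((n : ℝ) - 2)) = 1 := by
      rw [← pow_mul, ← Real.rpow_natCast, ← Real.rpow_mul hvp.le, ← Real.rpow_add hvp]
      have : β * ((2 * k : ℕ) : ℝ) + 4 * (k : ℝ) / ((n : ℝ) - 2) = 0 := by
        rw [hβ]; push_cast; ring
      rw [this, Real.rpow_zero]
    linear_combination (n.choose k : ℝ) * (1 / 2) ^ k * h1
  obtain ⟨G, hG, hG0, hGe⟩ := hgc_kelvin hn P p hv_pos hkelvin hβ
  have hxP : x ∉ P := fun h => by have := hPneg x h; rw [hx] at this; exact lt_irrefl _ this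
  have key := hgc_main_u (n := n) (k := k) hk (by omega) (c := (n.choose k : ℝ) * (1 / 2) ^ k)
    (W := fun y => u (p + y)) (G := G) (by fun_prop) (fun y => hunn _)
    (fun y h => hgc_C2_trans (hu2 _ (hunP _ h)))
    (fun y h => by rw [hgc_B_trans]; exact huσ _ (hunP _ h))
    (fun y h => by rw [hgc_B_trans]; exact huΓ _ (hunP _ h)) hG hG0
    (by
      filter_upwards [hGe, hgc_notin P p] with y h1 h2
      rw [h1, hgcInv, (hue _ h2).eq_of_nhds, one_pow, div_one])
    (by simp [hu, hp]) (i := i) (a := - p i) (by have := hPneg p hp; linarith)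
    (fun z hz => hupos _ fun h => by
      have h1 := hPneg _ h
      have h2 : (p + z) i = p i + z i := rfl
      linarith)
    (z0 := x - p) (by
      have h2 : (x - p) i = x i - p i := rfl
      rw [h2, hx, zero_sub])
  rw [fderiv_comp_add_left, add_sub_cancel, (hue x hxP).fderiv_eq] at key
  have hvp := hv_pos x hxP
  have h1 := hgc_pd_rpow ((hv2 x hxP).differentiableAt (by norm_num)) hvp β i
  rw [pd] at h1
  rw [h1] at key
  have h2 : 0 < v x ^ (β - 1) := Real.rpow_pos_of_pos hvp _
  have h3 : pd v i x < 0 := by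
    by_contra! h
    have : β * v x ^ (β - 1) * pd v i x ≤ 0 :=
      mul_nonpos_of_nonpos_of_nonneg (mul_nonpos_of_nonpos_of_nonneg hβn.le h2.le) h
    linarith
  refine ⟨h3, mul_pos_of_neg_of_neg ?_ h3⟩
  have h4 : 0 < 2 / ((n : ℝ) - 2) * (v x)⁻¹ := by positivity
  linarith
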